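/- arXiv:1809.08853 — 11 statements merged into one kernel-verified Lean document; each statement's English description precedes it below -/
import Mathlib

section
/- Let G be a finite group, n ≥ 1, and let g₁,…,gₙ and g₁′,…,gₙ′ be elements of G such that gᵢ′ is conjugate to gᵢ for every 1 ≤ i ≤ n. Then the sets 𝒟_{g₁,…,gₙ} and 𝒟_{g₁′,…,gₙ′} have the same cardinality. -/
/-- `𝒟_{g₁,…,gₙ}` : the set of tuples `(a₁,…,aₙ)` with
`g₁·a₁·g₂·a₂·⋯·gₙ·aₙ = 1` and `a₁·a₂·⋯·aₙ = 1`. -/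
def Dset {G : Type*} [Group G] {n : ℕ} (g : Fin n → G) : Set (Fin n → G) :=
  {a | (List.ofFn fun i => g i * a i).prod = 1 ∧ (List.ofFn a).prod = 1}

/-!
Write `gᵢ′ = cᵢ gᵢ cᵢ⁻¹` and substitute `aᵢ ↦ cᵢ aᵢ cᵢ₊₁⁻¹`, with indices read cyclically. Then
`gᵢ′ aᵢ′ = cᵢ (gᵢ aᵢ) cᵢ₊₁⁻¹`, so both defining products telescope to their conjugates by `c₁`, and
the substitution is a bijection between the two solution sets.
-/

section GaugeTransform

variable {G : Type*} [Group G] {n : ℕ}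

/-- The gauge transformation `aᵢ ↦ dᵢ aᵢ dᵢ₊₁⁻¹`, where `aᵢ` is regarded as sitting on the `i`-th
edge of a path with vertices `0, …, n` and `d` assigns a group element to each vertex. A cyclic
substitution is encoded by requiring `d (Fin.last n) = d 0`. -/
def gaugeTransform (d : Fin (n + 1) → G) : (Fin n → G) ≃ (Fin n → G) :=
  Equiv.piCongrRight fun i => (Equiv.mulLeft (d i.castSucc)).trans (Equiv.mulRight (d i.succ)⁻¹)

theorem gaugeTransform_apply (d : Fin (n + 1) → G) (a : Fin n → G) (i : Fin n) :
    gaugeTransform d a i = d i.castSucc * a i * (d i.succ)⁻¹ :=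
  rfl

theorem prod_ofFn_gaugeTransform (d : Fin (n + 1) → G) (a : Fin n → G) :
    (List.ofFn (gaugeTransform d a)).prod = d 0 * (List.ofFn a).prod * (d (Fin.last n))⁻¹ := by
  induction n with
  | zero => simp
  | succ n ih =>
    have tail_eq : (fun i : Fin n => gaugeTransform d a i.succ) =
        gaugeTransform (Fin.tail d) (Fin.tail a) := rfl
    rw [List.ofFn_succ, List.prod_cons, tail_eq, ih, List.ofFn_succ, List.prod_cons,
      gaugeTransform_apply]
    simp [Fin.tail_def, mul_assoc]

theorem prod_ofFn_gaugeTransform_eq_one_iff {d : Fin (n + 1) → G} (hd : d (Fin.last n) = d 0)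
    (a : Fin n → G) :
    (List.ofFn (gaugeTransform d a)).prod = 1 ↔ (List.ofFn a).prod = 1 := by
  rw [prod_ofFn_gaugeTransform, hd, conj_eq_one_iff]

theorem conj_mul_gaugeTransform (d : Fin (n + 1) → G) (g a : Fin n → G) :
    (fun i => d i.castSucc * g i * (d i.castSucc)⁻¹ * gaugeTransform d a i) =
      gaugeTransform d (fun i => g i * a i) := by
  ext i
  simp only [gaugeTransform_apply]
  group

theorem gaugeTransform_mem_Dset_conj_iff {d : Fin (n + 1) → G} (hd : d (Fin.last n) = d 0)
    (g a : Fin n → G) :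
    gaugeTransform d a ∈ Dset (fun i => d i.castSucc * g i * (d i.castSucc)⁻¹) ↔ a ∈ Dset g := by
  simp only [Dset, Set.mem_ofPred_eq, conj_mul_gaugeTransform,
    prod_ofFn_gaugeTransform_eq_one_iff hd]

end GaugeTransform

theorem exists_castSucc_eq_and_last_eq_apply_zero {α : Type*} [Nonempty α] {n : ℕ} (c : Fin n → α) :
    ∃ d : Fin (n + 1) → α, (∀ i, d i.castSucc = c i) ∧ d (Fin.last n) = d 0 := by
  cases n with
  | zero => exact ⟨fun _ => Classical.arbitrary α, finZeroElim, rfl⟩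
  | succ n =>
    refine ⟨Fin.snoc c (c 0), fun i => by rw [Fin.snoc_castSucc], ?_⟩
    rw [Fin.snoc_last, Fin.snoc_apply_zero]

theorem stmt2_general {G : Type*} [Group G] {n : ℕ} {g g' : Fin n → G}
    (hconj : ∀ i, IsConj (g i) (g' i)) : Nonempty (Dset g ≃ Dset g') := by
  choose c hc using fun i => isConj_iff.1 (hconj i)
  obtain ⟨d, hdc, hd⟩ := exists_castSucc_eq_and_last_eq_apply_zero c
  obtain rfl : (fun i => d i.castSucc * g i * (d i.castSucc)⁻¹) = g' :=
    funext fun i => by rw [hdc, hc]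
  exact ⟨(gaugeTransform d).subtypeEquiv fun a => (gaugeTransform_mem_Dset_conj_iff hd g a).symm⟩

/-- If `gᵢ′` is conjugate to `gᵢ` for every `i`, then `𝒟_{g₁,…,gₙ}` and
`𝒟_{g₁′,…,gₙ′}` have the same cardinality. -/
theorem stmt2 {G : Type*} [Group G] [Fintype G] {n : ℕ} (hn : 1 ≤ n)
    (g g' : Fin n → G) (hconj : ∀ i : Fin n, ∃ c : G, c * g i * c⁻¹ = g' i) :
    Nat.card ↥(Dset g) = Nat.card ↥(Dset g') := by
  obtain ⟨e⟩ := stmt2_general fun i => isConj_iff.2 (hconj i)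
  exact Nat.card_congr e
end

section
/- Let G be a finite group, n ≥ 1, and g₁,…,gₙ ∈ G. For every permutation σ of {1,…,n}, the sets 𝒟_{g₁,…,gₙ} and 𝒟_{g_{σ(1)},…,g_{σ(n)}} have the same cardinality. -/
/-!
Both defining equations of `𝒟` have right-hand side `1`, so a tuple may be rotated cyclically
together with `g`. Two neighbouring entries of `g` are exchanged by the local substitution
`(a₀, a₁, a₂) ↦ (a₀ g₁ a₁, (g₁ a₁)⁻¹, a₁ a₂)`: it preserves `a₀ a₁ a₂`, and
`g₀ a₀ · g₁ a₁ · g₂ a₂ = g₀ (a₀ g₁ a₁) · g₂ (g₁ a₁)⁻¹ · g₁ (a₁ a₂)`.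
It is the Hurwitz move `(x, y) ↦ (x y x⁻¹, x)` on the conjugates of the `gᵢ` by the partial
products of `a`. A full cycle and one adjacent transposition generate the symmetric group.
-/

open Equiv

theorem prod_ofFn_comp_finRotate_eq_one_iff {M : Type*} [Monoid M] [IsDedekindFiniteMonoid M]
    {n : ℕ} (a : Fin n → M) :
    (List.ofFn (a ∘ finRotate n)).prod = 1 ↔ (List.ofFn a).prod = 1 := by
  cases n with
  | zero => simp
  | succ n =>
    rw [List.ofFn_succ', List.ofFn_succ, List.concat_eq_append, List.prod_append,
      List.prod_singleton, List.prod_cons, mul_eq_one_comm]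
    simp

section

variable {G : Type*} [Group G] {n : ℕ}

theorem mem_Dset_comp_finRotate_iff (g a : Fin n → G) :
    a ∘ finRotate n ∈ Dset (g ∘ finRotate n) ↔ a ∈ Dset g :=
  and_congr (prod_ofFn_comp_finRotate_eq_one_iff fun i => g i * a i)
    (prod_ofFn_comp_finRotate_eq_one_iff a)

/-- The Hurwitz move `(a₀, a₁, a₂, …) ↦ (a₀ h a₁, (h a₁)⁻¹, a₁ a₂, …)`, which compensates for
moving `h` from position `1` to position `2` in the sequence interleaved with `a`. -/
def hurwitzMove (h : G) : (Fin (n + 3) → G) ≃ (Fin (n + 3) → G) where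
  toFun a :=
    Matrix.vecCons (a 0 * h * a 1) <| Matrix.vecCons (h * a 1)⁻¹ <|
      Matrix.vecCons (a 1 * a 2) fun i => a i.succ.succ.succ
  invFun a :=
    Matrix.vecCons (a 0 * a 1) <| Matrix.vecCons (a 1 * h)⁻¹ <|
      Matrix.vecCons (a 1 * h * a 2) fun i => a i.succ.succ.succ
  left_inv a := by
    ext i
    refine Fin.cases ?_ (Fin.cases ?_ (Fin.cases ?_ fun i => ?_)) i <;> simp [mul_assoc]
  right_inv a := by
    ext i
    refine Fin.cases ?_ (Fin.cases ?_ (Fin.cases ?_ fun i => ?_)) i <;> simp [mul_assoc]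

theorem prod_ofFn_hurwitzMove (h : G) (a : Fin (n + 3) → G) :
    (List.ofFn (hurwitzMove h a)).prod = (List.ofFn a).prod := by
  simp [hurwitzMove, List.ofFn_succ, mul_assoc]

theorem prod_ofFn_comp_swap_mul_hurwitzMove (g a : Fin (n + 3) → G) :
    (List.ofFn fun i => (g ∘ swap 1 2) i * hurwitzMove (g 1) a i).prod =
      (List.ofFn fun i => g i * a i).prod := by
  have swap_zero : swap (1 : Fin (n + 3)) 2 0 = 0 := by
    simp [swap_apply_def, Fin.ext_iff, Nat.mod_eq_of_lt]
  have swap_succ (i : Fin n) : swap (1 : Fin (n + 3)) 2 i.succ.succ.succ = i.succ.succ.succ := by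
    simp [swap_apply_def, Fin.ext_iff, Nat.mod_eq_of_lt]
  simp [swap_zero, swap_succ, hurwitzMove, List.ofFn_succ, mul_assoc]

theorem hurwitzMove_mem_Dset_comp_swap_iff (g a : Fin (n + 3) → G) :
    hurwitzMove (g 1) a ∈ Dset (g ∘ swap 1 2) ↔ a ∈ Dset g := by
  simp only [Dset, Set.mem_ofPred_eq, prod_ofFn_comp_swap_mul_hurwitzMove, prod_ofFn_hurwitzMove]

variable (G n) in
/-- The group of those permutations of the positions `0, …, n - 1` that preserve the equipotence
class of `Dset g` for every `g`. -/
def dsetSymmetry : Subgroup (Perm (Fin n)) where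
  carrier := {σ | ∀ g : Fin n → G, Nonempty (Dset g ≃ Dset (g ∘ σ))}
  one_mem' _ := ⟨Equiv.refl _⟩
  mul_mem' {σ _} hσ hτ g := (hσ g).map2 Equiv.trans (hτ (g ∘ σ))
  inv_mem' {σ} hσ g := by
    simpa [Function.comp_assoc] using (hσ (g ∘ σ.symm)).map Equiv.symm

theorem finRotate_mem_dsetSymmetry : finRotate n ∈ dsetSymmetry G n := fun g =>
  ⟨((finRotate n).symm.arrowCongr (Equiv.refl G)).subtypeEquiv fun a =>
    (mem_Dset_comp_finRotate_iff g a).symm⟩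

theorem swap_one_two_mem_dsetSymmetry : swap 1 2 ∈ dsetSymmetry G (n + 3) := fun g =>
  ⟨(hurwitzMove (g 1)).subtypeEquiv fun a => (hurwitzMove_mem_Dset_comp_swap_iff g a).symm⟩

theorem dsetSymmetry_eq_top : dsetSymmetry G n = ⊤ := by
  match n with
  | 0 | 1 => exact Subsingleton.elim _ _
  | 2 =>
    have eq_one_or_eq_finRotate : ∀ σ : Perm (Fin 2), σ = 1 ∨ σ = finRotate 2 := by decide
    refine (Subgroup.eq_top_iff' _).2 fun σ => ?_
    obtain rfl | rfl := eq_one_or_eq_finRotate σ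
    · exact one_mem _
    · exact finRotate_mem_dsetSymmetry
  | n + 3 =>
    have closure_eq_top := Perm.closure_cycle_adjacent_swap
      (isCycle_finRotate (n := n + 1)) support_finRotate 1
    rw [eq_top_iff, ← closure_eq_top, Subgroup.closure_le, Set.pair_subset_iff]
    have finRotate_one_eq_two : finRotate (n + 3) 1 = 2 :=
      finRotate_of_lt (k := 1) (by lia)
    rw [finRotate_one_eq_two]
    exact ⟨finRotate_mem_dsetSymmetry, swap_one_two_mem_dsetSymmetry⟩

end

theorem stmt3_general {G : Type*} [Group G] {n : ℕ} (g : Fin n → G) (σ : Perm (Fin n)) :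
    Nonempty (Dset g ≃ Dset (fun i => g (σ i))) :=
  (Subgroup.eq_top_iff' _).1 dsetSymmetry_eq_top σ g

/-- For every permutation `σ` of `{1,…,n}`, the sets `𝒟_{g₁,…,gₙ}` and
`𝒟_{g_{σ(1)},…,g_{σ(n)}}` have the same cardinality. -/
theorem stmt3 {G : Type*} [Group G] [Fintype G] {n : ℕ} (hn : 1 ≤ n)
    (g : Fin n → G) (σ : Equiv.Perm (Fin n)) :
    Nat.card ↥(Dset g) = Nat.card ↥(Dset (fun i => g (σ i))) :=
  (stmt3_general g σ).elim Nat.card_congr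
end

section
/- Let G be a finite group and g, h, k ∈ G. Then the cardinality of 𝒟_{g,h,k⁻¹} equals |C_G(k)| multiplied by the number of elements x ∈ G such that g·x·h·x⁻¹ is conjugate to k. -/
/-!
The equation `a₁a₂a₃ = 1` determines `a₂`, and substituting it turns `g a₁ h a₂ k⁻¹ a₃ = 1` into
`a₃ (g a₁ h a₁⁻¹) a₃⁻¹ = k`. So `𝒟_{g,h,k⁻¹}` fibres over the `x = a₁` for which `g x h x⁻¹` is
conjugate to `k`, and each fibre, the set of `c` conjugating `g x h x⁻¹` to `k`, is a coset of the
centralizer of `k`.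
-/

section Conjugation

variable {G : Type*} [Group G]

/-- The elements conjugating `a` to `b` form the right coset `C(b) * c₀` of the centralizer of `b`,
where `c₀` is any one of them. -/
def conjugatorEquivCentralizer {a b c₀ : G} (hc₀ : c₀ * a * c₀⁻¹ = b) :
    {c : G // c * a * c⁻¹ = b} ≃ {z : G // z * b = b * z} :=
  (Equiv.mulRight c₀⁻¹).subtypeEquiv fun c => by
    have conj_eq : c * c₀⁻¹ * b * (c * c₀⁻¹)⁻¹ = c * a * c⁻¹ := by rw [← hc₀]; group
    rw [Equiv.coe_mulRight, ← mul_inv_eq_iff_eq_mul, conj_eq]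

/-- Pairs `(i, c)` with `c` conjugating `f i` to `b`, as a product of the centralizer of `b` and the
set of admissible indices `i`; a conjugating element is chosen for each such index. -/
noncomputable def conjugatorPairsEquiv {ι : Type*} (f : ι → G) (b : G) :
    {p : ι × G // p.2 * f p.1 * p.2⁻¹ = b} ≃
      {z : G // z * b = b * z} × {i : ι // ∃ c : G, c * f i * c⁻¹ = b} :=
  calc
    {p : ι × G // p.2 * f p.1 * p.2⁻¹ = b}
    _ ≃ Σ i : ι, {c : G // c * f i * c⁻¹ = b} :=
      Equiv.subtypeProdEquivSigmaSubtype fun i c => c * f i * c⁻¹ = b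
    _ ≃ Σ i : {i : ι // ∃ c : G, c * f i * c⁻¹ = b}, {c : G // c * f i * c⁻¹ = b} :=
      (Equiv.sigmaSubtypeEquivOfSubset _ _ fun _ c => ⟨c.1, c.2⟩).symm
    _ ≃ Σ _ : {i : ι // ∃ c : G, c * f i * c⁻¹ = b}, {z : G // z * b = b * z} :=
      Equiv.sigmaCongrRight fun i => conjugatorEquivCentralizer i.2.choose_spec
    _ ≃ {i : ι // ∃ c : G, c * f i * c⁻¹ = b} × {z : G // z * b = b * z} :=
      Equiv.sigmaEquivProd _ _
    _ ≃ {z : G // z * b = b * z} × {i : ι // ∃ c : G, c * f i * c⁻¹ = b} :=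
      Equiv.prodComm _ _

end Conjugation

namespace Dset

variable {G : Type*} [Group G]

theorem mem_fin_three {g a : Fin 3 → G} :
    a ∈ Dset g ↔
      g 0 * a 0 * (g 1 * a 1) * (g 2 * a 2) = 1 ∧ a 0 * a 1 * a 2 = 1 := by
  simp [Dset, List.ofFn_succ, mul_assoc]

theorem mem_iff_conj_eq {g h k : G} {a : Fin 3 → G} :
    a ∈ Dset ![g, h, k⁻¹] ↔
      a 2 * (g * a 0 * h * (a 0)⁻¹) * (a 2)⁻¹ = k ∧ a 1 = (a 0)⁻¹ * (a 2)⁻¹ := by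
  have prod_eq_one_iff : a 0 * a 1 * a 2 = 1 ↔ a 1 = (a 0)⁻¹ * (a 2)⁻¹ := by
    rw [mul_eq_one_iff_eq_inv, eq_inv_mul_iff_mul_eq]
  rw [mem_fin_three, prod_eq_one_iff]
  refine and_congr_left fun middle_eq => ?_
  have word_conj : a 2 * (g * a 0 * (h * a 1) * (k⁻¹ * a 2)) * (a 2)⁻¹ =
      a 2 * (g * a 0 * h * (a 0)⁻¹) * (a 2)⁻¹ * k⁻¹ := by
    rw [middle_eq]; group
  change g * a 0 * (h * a 1) * (k⁻¹ * a 2) = 1 ↔ _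
  rw [← conj_eq_one_iff (a := a 2), word_conj, mul_inv_eq_one]

/-- A triple in `𝒟_{g,h,k⁻¹}` is determined by its outer entries `(a₁, a₃)`. -/
def equivConjugatorPairs (g h k : G) :
    ↥(Dset ![g, h, k⁻¹]) ≃ {p : G × G // p.2 * (g * p.1 * h * p.1⁻¹) * p.2⁻¹ = k} where
  toFun a := ⟨(a.1 0, a.1 2), (mem_iff_conj_eq.1 a.2).1⟩
  invFun p := ⟨![p.1.1, p.1.1⁻¹ * p.1.2⁻¹, p.1.2], mem_iff_conj_eq.2 ⟨p.2, rfl⟩⟩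
  left_inv a := by
    ext i
    fin_cases i
    · rfl
    · exact (mem_iff_conj_eq.1 a.2).2.symm
    · rfl
  right_inv _ := rfl

end Dset

theorem stmt5_general {G : Type*} [Group G] (g h k : G) :
    Nonempty (↥(Dset ![g, h, k⁻¹]) ≃
      {x : G // x * k = k * x} × {x : G // ∃ c : G, c * (g * x * h * x⁻¹) * c⁻¹ = k}) :=
  ⟨(Dset.equivConjugatorPairs g h k).trans
    (conjugatorPairsEquiv (fun x => g * x * h * x⁻¹) k)⟩

/-- `|𝒟_{g,h,k⁻¹}| = |C_G(k)| · #{x ∈ G : g·x·h·x⁻¹ is conjugate to k}`. -/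
theorem stmt5 {G : Type*} [Group G] [Fintype G] (g h k : G) :
    Nat.card ↥(Dset ![g, h, k⁻¹]) =
      Nat.card {x : G // x * k = k * x} *
        Nat.card {x : G // ∃ c : G, c * (g * x * h * x⁻¹) * c⁻¹ = k} := by
  obtain ⟨e⟩ := stmt5_general g h k
  rw [Nat.card_congr e, Nat.card_prod]
end

section
/- Let G be a finite group, n ≥ 2, g₁,…,gₙ ∈ G, and let v be an index with 2 ≤ v ≤ n. Then Σ_{c ∈ G} |𝒟_{g₁,…,g_{v-1},c}| · |𝒟_{c⁻¹,g_v,…,gₙ}| = |G| · |𝒟_{g₁,…,gₙ}|, where the sum runs over all elements c of G. (This is the gluing identity B̄_{i₁,…,iₖ} = Σ_j (1/v_j) B̄_{i₁,…,i_{v-1},j} B̄_{j⋆,i_v,…,iₖ} of the paper, rewritten as a sum over group elements instead of conjugacy classes.) -/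
/-!
Write `P a = a₁⋯aₙ` and `W a = g₁a₁⋯gₙaₙ`. Membership in `𝒟` determines the entry of a tuple next
to `c` or `c⁻¹`, so the left-hand side counts the pairs `(a, b)` with `(W a)⁻¹ P a = (P b)⁻¹ W b`,
the common value being `c`. Multiplying the last entry of `a` by `(P b)⁻¹` on the right turns this
condition into `W x = P x` for the concatenation `x` of `a` and `b`. Finally, right multiplication
of the last entry multiplies `W x` and `P x` by the same element, so that the solutions of
`W x = P x` form `|G|` translates of the set of those with `W x = P x = 1`.
-/

section Mul

variable {M : Type*} [Mul M] {k m n : ℕ}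

theorem cons_mul_cons (x y : M) (a b : Fin n → M) :
    (Fin.cons x a * Fin.cons y b : Fin (n + 1) → M) = Fin.cons (x * y) (a * b) := by
  funext i
  cases i using Fin.cases <;> simp

theorem snoc_mul_snoc (a b : Fin n → M) (x y : M) :
    (Fin.snoc a x * Fin.snoc b y : Fin (n + 1) → M) = Fin.snoc (a * b) (x * y) := by
  funext i
  cases i using Fin.lastCases <;> simp

theorem append_mul_append (a b : Fin k → M) (a' b' : Fin m → M) :
    Fin.append a a' * Fin.append b b' = Fin.append (a * b) (a' * b') := by
  funext i
  cases i using Fin.addCases <;> simp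

end Mul

section Monoid

variable {M : Type*} [Monoid M] {k m n : ℕ}

/-- The ordered product `a₁⋯aₙ` of a tuple in a possibly noncommutative monoid. The product
`g₁a₁⋯gₙaₙ` is `tupleProd (g * a)`, with pointwise multiplication of tuples. -/
def tupleProd (a : Fin n → M) : M :=
  (List.ofFn a).prod

theorem tupleProd_cons (x : M) (a : Fin n → M) :
    tupleProd (Fin.cons x a : Fin (n + 1) → M) = x * tupleProd a := by
  simp [tupleProd, List.ofFn_succ]

theorem tupleProd_snoc (a : Fin n → M) (x : M) :
    tupleProd (Fin.snoc a x : Fin (n + 1) → M) = tupleProd a * x := by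
  simp [tupleProd, List.ofFn_succ', List.concat_eq_append, -List.ofFn_succ]

theorem tupleProd_append (a : Fin k → M) (b : Fin m → M) :
    tupleProd (Fin.append a b) = tupleProd a * tupleProd b := by
  simp [tupleProd, List.ofFn_fin_append]

theorem tupleProd_mul_mulSingle_last (a : Fin (n + 1) → M) (t : M) :
    tupleProd (a * Pi.mulSingle (Fin.last n) t) = tupleProd a * t := by
  simp [tupleProd, List.ofFn_succ', List.concat_eq_append, mul_assoc, -List.ofFn_succ]

end Monoid

section Group

variable {G : Type*} [Group G] {k m n : ℕ}

theorem mem_Dset_iff {g a : Fin n → G} :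
    a ∈ Dset g ↔ tupleProd (g * a) = 1 ∧ tupleProd a = 1 :=
  Iff.rfl

theorem snoc_mem_Dset_snoc_iff {g a : Fin n → G} {c x : G} :
    (Fin.snoc a x : Fin (n + 1) → G) ∈ Dset (Fin.snoc g c) ↔
      x = (tupleProd a)⁻¹ ∧ tupleProd (g * a) * c = tupleProd a := by
  rw [mem_Dset_iff, snoc_mul_snoc, tupleProd_snoc, tupleProd_snoc, and_comm,
    mul_eq_one_iff_inv_eq, eq_comm]
  refine and_congr_right fun hx => ?_
  rw [hx, ← mul_assoc, mul_inv_eq_one]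

theorem cons_mem_Dset_cons_iff {g a : Fin n → G} {c x : G} :
    (Fin.cons x a : Fin (n + 1) → G) ∈ Dset (Fin.cons c⁻¹ g) ↔
      x = (tupleProd a)⁻¹ ∧ tupleProd a * c = tupleProd (g * a) := by
  rw [mem_Dset_iff, cons_mul_cons, tupleProd_cons, tupleProd_cons, and_comm, mul_eq_one_iff_eq_inv]
  refine and_congr_right fun hx => ?_
  rw [hx, ← mul_inv_rev, inv_mul_eq_one]

/-- Forgetting the last entry, which is determined by the others, identifies `𝒟_{g₁,…,gₙ,c}` with
the tuples `a` of length `n` such that `g₁a₁⋯gₙaₙ · c = a₁⋯aₙ`. -/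
def dsetSnocEquiv (g : Fin n → G) (c : G) :
    Dset (Fin.snoc g c : Fin (n + 1) → G) ≃
      {a : Fin n → G // tupleProd (g * a) * c = tupleProd a} where
  toFun x := ⟨Fin.init x.1, (snoc_mem_Dset_snoc_iff.1 ((Fin.snoc_init_self x.1).symm ▸ x.2)).2⟩
  invFun a := ⟨Fin.snoc a.1 (tupleProd a.1)⁻¹, snoc_mem_Dset_snoc_iff.2 ⟨rfl, a.2⟩⟩
  left_inv := by
    rintro ⟨x, hx⟩
    cases x using Fin.snocCases with
    | _ a x => simp [(snoc_mem_Dset_snoc_iff.1 hx).1]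
  right_inv a := by simp

/-- Forgetting the first entry, which is determined by the others, identifies `𝒟_{c⁻¹,g₁,…,gₙ}`
with the tuples `a` of length `n` such that `a₁⋯aₙ · c = g₁a₁⋯gₙaₙ`. -/
def dsetConsEquiv (g : Fin n → G) (c : G) :
    Dset (Fin.cons c⁻¹ g : Fin (n + 1) → G) ≃
      {a : Fin n → G // tupleProd a * c = tupleProd (g * a)} where
  toFun x := ⟨Fin.tail x.1, (cons_mem_Dset_cons_iff.1 ((Fin.cons_self_tail x.1).symm ▸ x.2)).2⟩
  invFun a := ⟨Fin.cons (tupleProd a.1)⁻¹ a.1, cons_mem_Dset_cons_iff.2 ⟨rfl, a.2⟩⟩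
  left_inv := by
    rintro ⟨x, hx⟩
    cases x using Fin.consCases with
    | _ x a => simp [(cons_mem_Dset_cons_iff.1 hx).1]
  right_inv a := by simp

/-- The tuples `a` with `g₁a₁⋯gₙaₙ = a₁⋯aₙ`, whereas in `𝒟_{g₁,…,gₙ}` both products are `1`. -/
def balancedTuples (g : Fin n → G) : Set (Fin n → G) :=
  {a | tupleProd (g * a) = tupleProd a}

theorem mem_balancedTuples_iff {g a : Fin n → G} :
    a ∈ balancedTuples g ↔ tupleProd (g * a) = tupleProd a :=
  Iff.rfl

theorem append_mem_balancedTuples_append_iff {g a : Fin k → G} {h b : Fin m → G} :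
    Fin.append a b ∈ balancedTuples (Fin.append g h) ↔
      tupleProd (g * a) * tupleProd (h * b) = tupleProd a * tupleProd b := by
  rw [mem_balancedTuples_iff, append_mul_append, tupleProd_append, tupleProd_append]

theorem mul_mulSingle_last_mem_balancedTuples_iff {g a : Fin (n + 1) → G} {t : G} :
    a * Pi.mulSingle (Fin.last n) t ∈ balancedTuples g ↔ a ∈ balancedTuples g := by
  rw [mem_balancedTuples_iff, mem_balancedTuples_iff, ← mul_assoc, tupleProd_mul_mulSingle_last,
    tupleProd_mul_mulSingle_last, mul_left_inj]

theorem mem_Dset_iff_mem_balancedTuples {g a : Fin n → G} :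
    a ∈ Dset g ↔ a ∈ balancedTuples g ∧ tupleProd a = 1 := by
  rw [mem_Dset_iff, mem_balancedTuples_iff]
  exact and_congr_left fun ha => by rw [ha]

/-- Each orbit of right multiplication of the last entry on the balanced tuples contains exactly one
tuple with product `1`. -/
def balancedTuplesEquiv (g : Fin (n + 1) → G) : balancedTuples g ≃ G × Dset g where
  toFun x := (tupleProd x.1, ⟨x.1 * Pi.mulSingle (Fin.last n) (tupleProd x.1)⁻¹,
    mem_Dset_iff_mem_balancedTuples.2 ⟨mul_mulSingle_last_mem_balancedTuples_iff.2 x.2, by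
      rw [tupleProd_mul_mulSingle_last, mul_inv_cancel]⟩⟩)
  invFun p := ⟨p.2.1 * Pi.mulSingle (Fin.last n) p.1,
    mul_mulSingle_last_mem_balancedTuples_iff.2 (mem_Dset_iff_mem_balancedTuples.1 p.2.2).1⟩
  left_inv x := by simp [mul_assoc, ← Pi.mulSingle_mul]
  right_inv p := by
    have prod_eq_one : tupleProd p.2.1 = 1 := p.2.2.2
    ext1
    · simp [tupleProd_mul_mulSingle_last, prod_eq_one]
    · ext1
      simp [tupleProd_mul_mulSingle_last, prod_eq_one, mul_assoc, ← Pi.mulSingle_mul]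

/-- The pairs `(a, b)` for which `c = (g₁a₁⋯gₖaₖ)⁻¹ · a₁⋯aₖ` also satisfies
`b₁⋯bₘ · c = h₁b₁⋯hₘbₘ`. -/
def gluingPairs (g : Fin k → G) (h : Fin m → G) : Set ((Fin k → G) × (Fin m → G)) :=
  {p | tupleProd p.2 * ((tupleProd (g * p.1))⁻¹ * tupleProd p.1) = tupleProd (h * p.2)}

theorem mem_gluingPairs_iff {g a : Fin k → G} {h b : Fin m → G} :
    (a, b) ∈ gluingPairs g h ↔
      tupleProd b * ((tupleProd (g * a))⁻¹ * tupleProd a) = tupleProd (h * b) :=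
  Iff.rfl

/-- A pair of elements of `𝒟_{g₁,…,gₖ,c}` and `𝒟_{c⁻¹,h₁,…,hₘ}` amounts to a gluing pair, from which
`c` can be recovered. -/
def sigmaDsetEquivGluingPairs (g : Fin k → G) (h : Fin m → G) :
    (Σ c : G, Dset (Fin.snoc g c : Fin (k + 1) → G) × Dset (Fin.cons c⁻¹ h : Fin (m + 1) → G)) ≃
      gluingPairs g h :=
  (Equiv.sigmaCongrRight fun c => (dsetSnocEquiv g c).prodCongr (dsetConsEquiv h c)).trans
    { toFun := fun ⟨_, a, b⟩ => ⟨(a, b), by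
        rw [mem_gluingPairs_iff, ← a.2, inv_mul_cancel_left, b.2]⟩
      invFun := fun p => ⟨_, ⟨p.1.1, mul_inv_cancel_left _ _⟩, ⟨p.1.2, p.2⟩⟩
      left_inv := by
        rintro ⟨c, ⟨a, ha⟩, ⟨b, _⟩⟩
        obtain rfl := eq_inv_mul_of_mul_eq ha
        rfl
      right_inv := fun _ => rfl }

theorem mem_gluingPairs_iff_append_mem_balancedTuples {g a : Fin (k + 1) → G} {h b : Fin m → G} :
    (a, b) ∈ gluingPairs g h ↔
      Fin.append (a * Pi.mulSingle (Fin.last k) (tupleProd b)⁻¹) b ∈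
        balancedTuples (Fin.append g h) := by
  rw [mem_gluingPairs_iff, append_mem_balancedTuples_append_iff, ← mul_assoc g,
    tupleProd_mul_mulSingle_last, tupleProd_mul_mulSingle_last, inv_mul_cancel_right, mul_assoc,
    ← eq_inv_mul_iff_mul_eq, inv_mul_eq_iff_eq_mul, eq_comm]

theorem nonempty_gluingPairs_equiv_balancedTuples (g : Fin k → G) (h : Fin m → G) :
    Nonempty (gluingPairs g h ≃ balancedTuples (Fin.append g h)) := by
  cases k with
  | zero =>
    refine ⟨(Fin.appendEquiv 0 m).subtypeEquiv fun ⟨a, b⟩ => ?_⟩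
    refine Iff.trans ?_ (append_mem_balancedTuples_append_iff (a := a) (b := b)).symm
    simp [mem_gluingPairs_iff, tupleProd, eq_comm]
  | succ k =>
    let shear : (Fin m → G) × (Fin (k + 1) → G) ≃ (Fin m → G) × (Fin (k + 1) → G) :=
      Equiv.prodShear (Equiv.refl _) fun b =>
        Equiv.mulRight (Pi.mulSingle (Fin.last k) (tupleProd b)⁻¹)
    exact ⟨((((Equiv.prodComm _ _).trans shear).trans (Equiv.prodComm _ _)).trans
      (Fin.appendEquiv (k + 1) m)).subtypeEquiv fun _ =>
        mem_gluingPairs_iff_append_mem_balancedTuples⟩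

theorem nonempty_balancedTuples_equiv (hn : n ≠ 0) (g : Fin n → G) :
    Nonempty (balancedTuples g ≃ G × Dset g) := by
  obtain ⟨n, rfl⟩ := Nat.exists_eq_succ_of_ne_zero hn
  exact ⟨balancedTuplesEquiv g⟩

theorem stmt6_general (hkm : k + m ≠ 0) (g : Fin k → G) (h : Fin m → G) :
    Nonempty ((Σ c : G, Dset (Fin.snoc g c : Fin (k + 1) → G) ×
      Dset (Fin.cons c⁻¹ h : Fin (m + 1) → G)) ≃ G × Dset (Fin.append g h)) := by
  obtain ⟨glue⟩ := nonempty_gluingPairs_equiv_balancedTuples g h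
  obtain ⟨normalize⟩ := nonempty_balancedTuples_equiv hkm (Fin.append g h)
  exact ⟨((sigmaDsetEquivGluingPairs g h).trans glue).trans normalize⟩

end Group

/-- The gluing identity
`Σ_{c ∈ G} |𝒟_{g₁,…,g_{v-1},c}| · |𝒟_{c⁻¹,g_v,…,gₙ}| = |G| · |𝒟_{g₁,…,gₙ}|`.
Here the sequence `g₁,…,gₙ` (with `n ≥ 2` and `2 ≤ v ≤ n`) is split as the
concatenation of its first `k = v - 1 ≥ 1` entries `g₁` and its last
`m = n - v + 1 ≥ 1` entries `g₂`. -/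
theorem stmt6 {G : Type*} [Group G] [Fintype G] {k m : ℕ} (hk : 1 ≤ k) (hm : 1 ≤ m)
    (g₁ : Fin k → G) (g₂ : Fin m → G) :
    ∑ c : G, Nat.card ↥(Dset (Fin.snoc g₁ c)) * Nat.card ↥(Dset (Fin.cons c⁻¹ g₂)) =
      Fintype.card G * Nat.card ↥(Dset (Fin.append g₁ g₂)) := by
  obtain ⟨e⟩ := stmt6_general (by lia) g₁ g₂
  simpa only [Nat.card_sigma, Nat.card_prod, Nat.card_eq_fintype_card] using Nat.card_congr e
end

section
/- Let G be a finite group and g, h, k ∈ G. Let A = {(x, y) ∈ G × G : x is conjugate to g, y is conjugate to h, and x·y is conjugate to k}. Then |C_G(g)| · |C_G(h)| · |C_G(k)| · |A| = |G| · |𝒟_{g,h,k⁻¹}|. -/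
/-!
Both sides count the tuples `(c₁, …, cₙ)` with `∏ cᵢ gᵢ cᵢ⁻¹ = 1`, here for `(g, h, k⁻¹)`.
On the one hand, `c ↦ (cᵢ gᵢ cᵢ⁻¹)ᵢ` maps them onto the tuples of conjugates of the `gᵢ` with
product `1`, and by orbit-stabilizer each fibre is a coset of `∏ C_G(gᵢ)`. On the other hand, such a
tuple is determined by `c₁` and the cyclic quotients `aᵢ = cᵢ⁻¹ cᵢ₊₁`, whose product telescopes
to `1`; as `∏ gᵢ aᵢ = c₁⁻¹ (∏ cᵢ gᵢ cᵢ⁻¹) c₁`, these quotients range over `𝒟_{g₁,…,gₙ}`.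
-/

section OrbitStabilizer

open MulAction

variable {Γ X : Type*} [Group Γ] [MulAction Γ X]

theorem orbitProdStabilizerEquivGroup_smul (x : X) (p : orbit Γ x × stabilizer Γ x) :
    orbitProdStabilizerEquivGroup Γ x p • x = p.1 := by
  have symm_fst (γ : Γ) : (((orbitProdStabilizerEquivGroup Γ x).symm γ).1 : X) = γ • x := rfl
  rw [← symm_fst, Equiv.symm_apply_apply]

/-- The orbit-stabilizer bijection, restricted to the part of the orbit lying in a set `S`. -/
noncomputable def smulMemEquivOrbitInterProdStabilizer (x : X) (S : Set X) :
    {γ : Γ // γ • x ∈ S} ≃ {y : X // y ∈ orbit Γ x ∧ y ∈ S} × stabilizer Γ x :=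
  calc
    {γ : Γ // γ • x ∈ S}
    _ ≃ {p : orbit Γ x × stabilizer Γ x // (p.1 : X) ∈ S} :=
      ((orbitProdStabilizerEquivGroup Γ x).subtypeEquiv fun p => by
        rw [orbitProdStabilizerEquivGroup_smul]).symm
    _ ≃ {y : orbit Γ x // (y : X) ∈ S} × stabilizer Γ x :=
      Equiv.prodSubtypeFstEquivSubtypeProd (p := fun y : orbit Γ x => (y : X) ∈ S)
    _ ≃ {y : X // y ∈ orbit Γ x ∧ y ∈ S} × stabilizer Γ x :=
      (Equiv.subtypeSubtypeEquivSubtypeInter (· ∈ orbit Γ x) (· ∈ S)).prodCongr (Equiv.refl _)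

end OrbitStabilizer

section Conjugation

open Cardinal

variable {G : Type*} [Group G]

theorem mk_conj_mem_eq_mk_centralizer_mul (g : G) (S : Set G) :
    #{c : G // c * g * c⁻¹ ∈ S} =
      #(Subgroup.centralizer {g}) * #{x : G // IsConj x g ∧ x ∈ S} := by
  have orbit_stabilizer :=
    mk_congr (smulMemEquivOrbitInterProdStabilizer (Γ := ConjAct G) g S)
  simp only [ConjAct.stabilizer_eq_centralizer, ConjAct.mem_orbit_conjAct, mk_prod, lift_id,
    mul_comm #{x : G // IsConj x g ∧ x ∈ S}] at orbit_stabilizer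
  exact orbit_stabilizer

theorem isConj_pi_iff {ι : Type*} {H : ι → Type*} [∀ i, Group (H i)] {x y : ∀ i, H i} :
    IsConj x y ↔ ∀ i, IsConj (x i) (y i) := by
  simp only [isConj_iff, funext_iff, Pi.mul_apply, Pi.inv_apply, Classical.skolem]

theorem mk_centralizer_pi {ι : Type*} {H : ι → Type*} [∀ i, Group (H i)] (x : ∀ i, H i) :
    #(Subgroup.centralizer {x}) = Cardinal.prod fun i => #(Subgroup.centralizer {x i}) := by
  have e : Subgroup.centralizer {x} ≃ ∀ i, Subgroup.centralizer {x i} :=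
    (Equiv.subtypeEquivRight fun z => by
      simp only [Subgroup.mem_centralizer_singleton_iff, funext_iff, Pi.mul_apply]).trans
      Equiv.subtypePiEquivPi
  rw [mk_congr e, mk_pi]

theorem isConj_inv_iff {x y : G} : IsConj x⁻¹ y⁻¹ ↔ IsConj x y := by
  simp only [isConj_iff, ← conj_inv, inv_inj]

theorem centralizer_singleton_inv (g : G) :
    Subgroup.centralizer {g⁻¹} = Subgroup.centralizer {g} := by
  ext x
  simp only [Subgroup.mem_centralizer_singleton_iff]
  exact Commute.inv_right_iff

end Conjugation

section Telescoping

variable {G : Type*} [Group G] {n : ℕ}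

theorem prod_ofFn_mul_inv_mul_succ (g : Fin n → G) (b : Fin (n + 1) → G) :
    (List.ofFn fun i => g i * ((b i.castSucc)⁻¹ * b i.succ)).prod =
      (b 0)⁻¹ * (List.ofFn fun i => b i.castSucc * g i * (b i.castSucc)⁻¹).prod *
        b (Fin.last n) := by
  induction n with
  | zero => simp
  | succ n ih =>
    have tail := ih (fun i => g i.succ) (fun i => b i.succ)
    simp only [Fin.succ_last, Fin.succ_zero_eq_one] at tail
    simp [List.ofFn_succ, tail, mul_assoc]

theorem prod_ofFn_inv_mul_succ (b : Fin (n + 1) → G) :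
    (List.ofFn fun i : Fin n => (b i.castSucc)⁻¹ * b i.succ).prod = (b 0)⁻¹ * b (Fin.last n) := by
  simpa using prod_ofFn_mul_inv_mul_succ 1 b

theorem inv_mul_succ_mem_Dset_iff (g : Fin n → G) (b : Fin (n + 1) → G) :
    (fun i => (b i.castSucc)⁻¹ * b i.succ) ∈ Dset g ↔
      (List.ofFn fun i => b i.castSucc * g i * (b i.castSucc)⁻¹).prod = 1 ∧
        b (Fin.last n) = b 0 := by
  rw [Dset, Set.mem_ofPred_eq, prod_ofFn_mul_inv_mul_succ, prod_ofFn_inv_mul_succ,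
    inv_mul_eq_one, eq_comm (a := b 0)]
  refine and_congr_left fun closed => ?_
  rw [closed, mul_eq_one_iff_eq_inv, mul_eq_left]

/-- A sequence in a group is determined by its successive quotients and its first term. -/
def quotientsProdHeadEquiv : (Fin (n + 1) → G) ≃ (Fin n → G) × G where
  toFun b := (fun i => (b i.castSucc)⁻¹ * b i.succ, b 0)
  invFun p := p.2 • Fin.partialProd p.1
  left_inv := Fin.partialProd_left_inv
  right_inv p := by ext <;> simp [Fin.partialProd_succ, mul_assoc]

/-- A closed sequence amounts to the sequence without its last term, which repeats the first. -/
def closedSeqEquivInit {α : Type*} (P : (Fin (n + 1) → α) → Prop) :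
    {b : Fin (n + 2) → α // P (fun i => b i.castSucc) ∧ b (Fin.last (n + 1)) = b 0} ≃
      {c : Fin (n + 1) → α // P c} where
  toFun b := ⟨fun i => b.1 i.castSucc, b.2.1⟩
  invFun c := ⟨Fin.snoc c.1 (c.1 0), by simpa using c.2, by rw [Fin.snoc_last, Fin.snoc_apply_zero]⟩
  left_inv b := Subtype.ext <| by
    refine funext (Fin.lastCases ?_ fun i => ?_)
    · simp [b.2.2]
    · simp
  right_inv c := by simp

/-- The tuples conjugating `g` to a tuple with product `1` are determined by their cyclic
quotients, which form an element of `𝒟_g`, and their first term. -/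
def conjProdEqOneEquivDsetProd (g : Fin (n + 1) → G) :
    {c : Fin (n + 1) → G // (List.ofFn (c * g * c⁻¹)).prod = 1} ≃ Dset g × G :=
  calc
    {c : Fin (n + 1) → G // (List.ofFn (c * g * c⁻¹)).prod = 1}
    _ ≃ {b : Fin (n + 2) → G //
          (List.ofFn fun i => b i.castSucc * g i * (b i.castSucc)⁻¹).prod = 1 ∧
            b (Fin.last (n + 1)) = b 0} :=
      (closedSeqEquivInit fun c => (List.ofFn (c * g * c⁻¹)).prod = 1).symm
    _ ≃ {p : (Fin (n + 1) → G) × G // p.1 ∈ Dset g} :=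
      quotientsProdHeadEquiv.subtypeEquiv fun b => (inv_mul_succ_mem_Dset_iff g b).symm
    _ ≃ Dset g × G := Equiv.prodSubtypeFstEquivSubtypeProd

end Telescoping

section Counting

open Cardinal

variable {G : Type*} [Group G]

theorem prod_mk_centralizer_mul_mk_conj_prod_eq_one {n : ℕ} (g : Fin (n + 1) → G) :
    (∏ i, #(Subgroup.centralizer {g i})) *
        #{x : Fin (n + 1) → G // (∀ i, IsConj (x i) (g i)) ∧ (List.ofFn x).prod = 1} =
      #G * #(Dset g) := by
  have by_conjugates := mk_conj_mem_eq_mk_centralizer_mul g {x | (List.ofFn x).prod = 1}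
  have by_quotients := mk_congr (conjProdEqOneEquivDsetProd g)
  simp only [isConj_pi_iff, mk_centralizer_pi, prod_eq_of_fintype, lift_uzero,
    Set.mem_ofPred_eq] at by_conjugates
  rw [← by_conjugates, by_quotients, mk_prod, lift_id, lift_id, mul_comm]

theorem isConj_triple_and_prod_eq_one_iff (g h k : G) (x : Fin 3 → G) :
    (∀ i, IsConj (x i) (![g, h, k⁻¹] i)) ∧ (List.ofFn x).prod = 1 ↔
      (IsConj (x 0) g ∧ IsConj (x 1) h ∧ IsConj (x 0 * x 1) k) ∧ x 2 = (x 0 * x 1)⁻¹ := by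
  have prod_eq_one_iff : (List.ofFn x).prod = 1 ↔ x 2 = (x 0 * x 1)⁻¹ := by
    rw [eq_inv_iff_mul_eq_one, mul_eq_one_comm]
    simp [List.ofFn_succ, mul_assoc]
  rw [prod_eq_one_iff]
  refine and_congr_left fun last_eq => ?_
  rw [← isConj_inv_iff (x := x 0 * x 1), ← last_eq]
  simp [Fin.forall_fin_succ]

/-- In a triple with product `1` the last entry is determined by the first two. -/
def conjTripleEquivConjPair (g h k : G) :
    {x : Fin 3 → G // (∀ i, IsConj (x i) (![g, h, k⁻¹] i)) ∧ (List.ofFn x).prod = 1} ≃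
      {p : G × G // IsConj p.1 g ∧ IsConj p.2 h ∧ IsConj (p.1 * p.2) k} where
  toFun x := ⟨(x.1 0, x.1 1), ((isConj_triple_and_prod_eq_one_iff g h k x.1).mp x.2).1⟩
  invFun p := ⟨![p.1.1, p.1.2, (p.1.1 * p.1.2)⁻¹],
    (isConj_triple_and_prod_eq_one_iff g h k _).mpr ⟨p.2, rfl⟩⟩
  left_inv x := Subtype.ext <| by
    have last_eq := ((isConj_triple_and_prod_eq_one_iff g h k x.1).mp x.2).2
    ext i
    fin_cases i
    exacts [rfl, rfl, last_eq.symm]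
  right_inv _ := rfl

theorem stmt7_general (g h k : G) :
    #{x : G // x * g = g * x} * #{x : G // x * h = h * x} * #{x : G // x * k = k * x} *
        #{p : G × G // (∃ c : G, c * p.1 * c⁻¹ = g) ∧
          (∃ c : G, c * p.2 * c⁻¹ = h) ∧ (∃ c : G, c * (p.1 * p.2) * c⁻¹ = k)} =
      #G * #(Dset ![g, h, k⁻¹]) := by
  simp only [← isConj_iff, ← Subgroup.mem_centralizer_singleton_iff]
  rw [← prod_mk_centralizer_mul_mk_conj_prod_eq_one, mk_congr (conjTripleEquivConjPair g h k),
    Fin.prod_univ_three]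
  simp [centralizer_singleton_inv]

end Counting

/-- With `A = {(x,y) : x ~ g, y ~ h, x·y ~ k}`, we have
`|C_G(g)|·|C_G(h)|·|C_G(k)|·|A| = |G|·|𝒟_{g,h,k⁻¹}|`. -/
theorem stmt7 {G : Type*} [Group G] [Fintype G] (g h k : G) :
    Nat.card {x : G // x * g = g * x} * Nat.card {x : G // x * h = h * x} *
        Nat.card {x : G // x * k = k * x} *
        Nat.card {p : G × G // (∃ c : G, c * p.1 * c⁻¹ = g) ∧
          (∃ c : G, c * p.2 * c⁻¹ = h) ∧ (∃ c : G, c * (p.1 * p.2) * c⁻¹ = k)} =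
      Fintype.card G * Nat.card ↥(Dset ![g, h, k⁻¹]) := by
  rw [← Nat.card_eq_fintype_card]
  simpa only [Nat.card, Cardinal.toNat_mul] using congrArg Cardinal.toNat (stmt7_general g h k)
end

section
/- Let G be a finite group, g, h ∈ G, and z ∈ G. Then |C_G(g)| · |C_G(h)| multiplied by the number of pairs (x, y) ∈ G × G with x conjugate to g, y conjugate to h and x·y = z, equals |𝒟_{g,h,z⁻¹}|. (Equivalently, the structure constants of the products of class sums in the group algebra ℂG are γ_{i,j}^k = B̄_{i,j,k⋆}/(v_i·v_j).) -/
/-!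
The substitution `c = a₃⁻¹ = a₁ a₂`, `d = a₂` turns the equations defining `𝒟_{g,h,z⁻¹}` into the
single equation `(c⁻¹ g c) (d⁻¹ h d) = z`. An element `c` amounts to the conjugate `x = c⁻¹ g c`
together with an element of `C_G(g)`, because the elements carrying `g` to a given `x` form a right
coset of `C_G(g)`. Treating `d` and `h` in the same way, the solutions `(c, d)` correspond to
triples consisting of elements of `C_G(g)` and `C_G(h)` and a pair `(x, y)` of conjugates with
`x y = z`.
-/

section

open Cardinal

variable {G : Type*} [Group G]

theorem conj_eq_iff_inv_conj_eq {c x g : G} : c * x * c⁻¹ = g ↔ c⁻¹ * g * c = x := by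
  rw [mul_inv_eq_iff_eq_mul, mul_assoc, inv_mul_eq_iff_eq_mul, eq_comm]

theorem commutes_iff_inv_conj_eq_self {u g : G} : u * g = g * u ↔ u⁻¹ * g * u = g := by
  rw [mul_assoc, inv_mul_eq_iff_eq_mul, eq_comm]

theorem inv_conj_centralizing_mul {u g : G} (hu : u * g = g * u) (k : G) :
    (u * k)⁻¹ * g * (u * k) = k⁻¹ * g * k :=
  calc (u * k)⁻¹ * g * (u * k) = k⁻¹ * (u⁻¹ * g * u) * k := by group
    _ = k⁻¹ * g * k := by rw [commutes_iff_inv_conj_eq_self.1 hu]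

theorem mul_inv_centralizes_of_inv_conj_eq {c k g : G} (hck : c⁻¹ * g * c = k⁻¹ * g * k) :
    c * k⁻¹ * g = g * (c * k⁻¹) :=
  commutes_iff_inv_conj_eq_self.2 <|
    calc (c * k⁻¹)⁻¹ * g * (c * k⁻¹) = k * (c⁻¹ * g * c) * k⁻¹ := by group
      _ = g := by rw [hck]; group

/-- A chosen element conjugating `x` to `g`: a representative of the right coset of `C_G(g)`
formed by all such elements. -/
noncomputable def conjugator {g : G} (x : {x : G // ∃ c : G, c * x * c⁻¹ = g}) : G :=
  x.2.choose

theorem inv_conj_conjugator {g : G} (x : {x : G // ∃ c : G, c * x * c⁻¹ = g}) :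
    (conjugator x)⁻¹ * g * conjugator x = x :=
  conj_eq_iff_inv_conj_eq.1 x.2.choose_spec

theorem inv_conj_mul_conjugator {g : G} (u : {u : G // u * g = g * u})
    (x : {x : G // ∃ c : G, c * x * c⁻¹ = g}) :
    (u * conjugator x)⁻¹ * g * (u * conjugator x) = x := by
  rw [inv_conj_centralizing_mul u.2, inv_conj_conjugator]

/-- The orbit–stabilizer bijection `C_G(g) × g^G ≃ G` for conjugation, normalised so that the
element corresponding to `(u, x)` conjugates `x` to `g`. -/
noncomputable def centralizerProdConjugatesEquiv (g : G) :
    {u : G // u * g = g * u} × {x : G // ∃ c : G, c * x * c⁻¹ = g} ≃ G where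
  toFun p := p.1 * conjugator p.2
  invFun c :=
    let x : {x : G // ∃ c : G, c * x * c⁻¹ = g} :=
      ⟨c⁻¹ * g * c, c, conj_eq_iff_inv_conj_eq.2 rfl⟩
    (⟨c * (conjugator x)⁻¹, mul_inv_centralizes_of_inv_conj_eq (inv_conj_conjugator x).symm⟩, x)
  left_inv := by
    rintro ⟨u, x⟩
    simp only [inv_conj_mul_conjugator, Subtype.coe_eta, mul_inv_cancel_right]
  right_inv c := inv_mul_cancel_right _ _

theorem inv_conj_centralizerProdConjugatesEquiv (g : G)
    (p : {u : G // u * g = g * u} × {x : G // ∃ c : G, c * x * c⁻¹ = g}) :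
    (centralizerProdConjugatesEquiv g p)⁻¹ * g * centralizerProdConjugatesEquiv g p = p.2 :=
  inv_conj_mul_conjugator p.1 p.2

/-- The parametrisation of the solutions `(c, d)` of `(c⁻¹ g c) (d⁻¹ h d) = z` by `C_G(g)`, `C_G(h)`
and the factorisations `z = x y` with `x` conjugate to `g` and `y` conjugate to `h`. -/
noncomputable def centralizersProdFactorizationsEquiv (g h z : G) :
    ({u : G // u * g = g * u} × {v : G // v * h = h * v}) ×
        {p : G × G // (∃ c : G, c * p.1 * c⁻¹ = g) ∧ (∃ c : G, c * p.2 * c⁻¹ = h) ∧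
          p.1 * p.2 = z} ≃
      {q : G × G // q.1⁻¹ * g * q.1 * (q.2⁻¹ * h * q.2) = z} :=
  calc
    _ ≃ {s : ({u : G // u * g = g * u} × {x : G // ∃ c : G, c * x * c⁻¹ = g}) ×
          ({v : G // v * h = h * v} × {y : G // ∃ c : G, c * y * c⁻¹ = h}) //
          (s.1.2 * s.2.2 : G) = z} :=
      { toFun t := ⟨((t.1.1, ⟨t.2.1.1, t.2.2.1⟩), (t.1.2, ⟨t.2.1.2, t.2.2.2.1⟩)), t.2.2.2.2⟩
        invFun s :=
          ((s.1.1.1, s.1.2.1), ⟨(s.1.1.2, s.1.2.2), s.1.1.2.2, s.1.2.2.2, s.2⟩) }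
    _ ≃ _ :=
      ((centralizerProdConjugatesEquiv g).prodCongr
        (centralizerProdConjugatesEquiv h)).subtypeEquiv fun s => by
          simp only [Equiv.prodCongr_apply, Prod.map_fst, Prod.map_snd,
            inv_conj_centralizerProdConjugatesEquiv]

theorem mem_Dset_three_iff {g a : Fin 3 → G} :
    a ∈ Dset g ↔ g 0 * a 0 * (g 1 * a 1) * (g 2 * a 2) = 1 ∧ a 0 * a 1 * a 2 = 1 := by
  simp [Dset, List.ofFn_succ, mul_assoc]

theorem eq_vec_of_mem_Dset {g a : Fin 3 → G} (ha : a ∈ Dset g) :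
    a = ![(a 2)⁻¹ * (a 1)⁻¹, a 1, (a 2)⁻¹⁻¹] := by
  have a_zero : a 0 = (a 2)⁻¹ * (a 1)⁻¹ :=
    eq_mul_inv_of_mul_eq (eq_inv_of_mul_eq_one_left (mem_Dset_three_iff.1 ha).2)
  ext i
  fin_cases i <;> simp [a_zero]

theorem vec_mem_Dset_iff {g h z c d : G} :
    ![c * d⁻¹, d, c⁻¹] ∈ Dset ![g, h, z⁻¹] ↔ c⁻¹ * g * c * (d⁻¹ * h * d) = z :=
  calc ![c * d⁻¹, d, c⁻¹] ∈ Dset ![g, h, z⁻¹]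
    _ ↔ g * (c * d⁻¹) * (h * d) * (z⁻¹ * c⁻¹) = 1 := by simp [mem_Dset_three_iff]
    _ ↔ c * (c⁻¹ * g * c * (d⁻¹ * h * d) * z⁻¹) * c⁻¹ = 1 := by
      rw [show c * (c⁻¹ * g * c * (d⁻¹ * h * d) * z⁻¹) * c⁻¹ =
        g * (c * d⁻¹) * (h * d) * (z⁻¹ * c⁻¹) by group]
    _ ↔ c⁻¹ * g * c * (d⁻¹ * h * d) = z := by rw [conj_eq_one_iff, mul_inv_eq_one]

/-- The change of variables `c = a₃⁻¹`, `d = a₂` on `𝒟_{g,h,z⁻¹}`. -/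
def conjugatorPairsEquivDset (g h z : G) :
    {q : G × G // q.1⁻¹ * g * q.1 * (q.2⁻¹ * h * q.2) = z} ≃ Dset ![g, h, z⁻¹] where
  toFun q := ⟨![q.1.1 * q.1.2⁻¹, q.1.2, q.1.1⁻¹], vec_mem_Dset_iff.2 q.2⟩
  invFun a :=
    ⟨((a.1 2)⁻¹, a.1 1), vec_mem_Dset_iff.1 (eq_vec_of_mem_Dset a.2 ▸ a.2)⟩
  left_inv q := by ext <;> simp
  right_inv a := Subtype.ext (eq_vec_of_mem_Dset a.2).symm

theorem stmt8_general (g h z : G) :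
    #{x : G // x * g = g * x} * #{x : G // x * h = h * x} *
        #{p : G × G // (∃ c : G, c * p.1 * c⁻¹ = g) ∧
          (∃ c : G, c * p.2 * c⁻¹ = h) ∧ p.1 * p.2 = z} =
      #(Dset ![g, h, z⁻¹]) := by
  rw [mul_def, mul_def]
  exact mk_congr <|
    (centralizersProdFactorizationsEquiv g h z).trans (conjugatorPairsEquivDset g h z)

end

/-- `|C_G(g)|·|C_G(h)| · #{(x,y) : x ~ g, y ~ h, x·y = z} = |𝒟_{g,h,z⁻¹}|`. -/
theorem stmt8 {G : Type*} [Group G] [Fintype G] (g h z : G) :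
    Nat.card {x : G // x * g = g * x} * Nat.card {x : G // x * h = h * x} *
        Nat.card {p : G × G // (∃ c : G, c * p.1 * c⁻¹ = g) ∧
          (∃ c : G, c * p.2 * c⁻¹ = h) ∧ p.1 * p.2 = z} =
      Nat.card ↥(Dset ![g, h, z⁻¹]) := by
  simpa only [map_mul, Nat.card] using congrArg Cardinal.toNat (stmt8_general g h z)
end

section
/- Let G be a group, n ≥ 3, and let i be an index with 1 ≤ i ≤ n-2. Then for all g, h ∈ G, the following colored braid relation holds on Gⁿ: Ψ_i[h] ∘ Ψ_{i+1}[g] ∘ Ψ_i[g] = Ψ_{i+1}[g] ∘ Ψ_i[g] ∘ Ψ_{i+1}[h]. (In particular, for g = h, the map ψ_g : G×G → G×G, (x,y) ↦ (y·x⁻¹·g⁻¹·x, x), is a set-theoretic R-matrix satisfying the Yang–Baxter equation.) -/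
/-- `Ψ_i[g]` (0-indexed here: `i` ranges over `0,…,n-2`, corresponding to the 1-indexed
positions `i+1, i+2`): the map sending `(b₁,…,bₙ)` to the tuple whose `i`-th entry is
`b_{i+1}·b_i⁻¹·g⁻¹·b_i`, whose `(i+1)`-th entry is `b_i`, all other entries unchanged. -/
def Psi {G : Type*} [Group G] {n : ℕ} (g : G) (i : ℕ) (hi : i + 1 < n)
    (b : Fin n → G) : Fin n → G := fun j =>
  if j = (⟨i, Nat.lt_of_succ_lt hi⟩ : Fin n) then
    b ⟨i + 1, hi⟩ * (b ⟨i, Nat.lt_of_succ_lt hi⟩)⁻¹ * g⁻¹ * b ⟨i, Nat.lt_of_succ_lt hi⟩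
  else if j = (⟨i + 1, hi⟩ : Fin n) then b ⟨i, Nat.lt_of_succ_lt hi⟩
  else b j

/-!
`Ψ_i[g]` applies the map `ψ_g (x, y) = (y x⁻¹ g⁻¹ x, x)` to two entries of a tuple, so the
relation only has to be checked on triples. There, with `u = x⁻¹ g⁻¹ x`, both sides send
`(x, y, z)` to `(z y⁻¹ h⁻¹ y u, y u, x)`: on the left the first entry arises as
`z u (y u)⁻¹ h⁻¹ (y u)`, and the two inner factors `u` cancel.
-/

section Triples

variable {X : Type*}

/-- The map `R × id` on triples: `R` acts on the first two components. -/
def mapFirstTwo (R : X × X → X × X) : X × X × X → X × X × X :=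
  fun (x, y, z) => ((R (x, y)).1, (R (x, y)).2, z)

/-- The map `id × R` on triples: `R` acts on the last two components. -/
def mapLastTwo (R : X × X → X × X) : X × X × X → X × X × X :=
  Prod.map id R

end Triples

section Tuples

variable {ι X : Type*}

/-- The triple of entries of a tuple at the positions `i`, `j`, `k`; it reduces statements about
`mapPairAt` on tuples to `mapFirstTwo` and `mapLastTwo` on triples. -/
def entriesAt (i j k : ι) (b : ι → X) : X × X × X :=
  (b i, b j, b k)

theorem eq_of_entriesAt_eq {i j k : ι} {b c : ι → X}
    (hentries : entriesAt i j k b = entriesAt i j k c)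
    (hrest : ∀ l, l ≠ i → l ≠ j → l ≠ k → b l = c l) : b = c := by
  simp only [entriesAt, Prod.mk.injEq] at hentries
  obtain ⟨hi, hj, hk⟩ := hentries
  funext l
  by_cases hl : l = i ∨ l = j ∨ l = k
  · rcases hl with rfl | rfl | rfl <;> assumption
  · push Not at hl
    exact hrest l hl.1 hl.2.1 hl.2.2

variable [DecidableEq ι]

/-- The map on `ι`-indexed tuples that applies `R` to the pair of entries at `i` and `j` and fixes
all other entries. It is meant for `i ≠ j`; for `i = j` the first component of `R` is kept. -/
def mapPairAt (R : X × X → X × X) (i j : ι) (b : ι → X) : ι → X :=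
  Function.update (Function.update b j (R (b i, b j)).2) i (R (b i, b j)).1

theorem mapPairAt_apply_left (R : X × X → X × X) (i j : ι) (b : ι → X) :
    mapPairAt R i j b i = (R (b i, b j)).1 :=
  Function.update_self ..

theorem mapPairAt_apply_right (R : X × X → X × X) {i j : ι} (hij : i ≠ j) (b : ι → X) :
    mapPairAt R i j b j = (R (b i, b j)).2 := by
  rw [mapPairAt, Function.update_of_ne hij.symm, Function.update_self]

theorem mapPairAt_apply_of_ne (R : X × X → X × X) {i j l : ι} (hi : l ≠ i) (hj : l ≠ j)
    (b : ι → X) : mapPairAt R i j b l = b l := by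
  rw [mapPairAt, Function.update_of_ne hi, Function.update_of_ne hj]

variable {i j k : ι}

theorem entriesAt_mapPairAt_first (R : X × X → X × X) (hij : i ≠ j) (hik : i ≠ k) (hjk : j ≠ k)
    (b : ι → X) :
    entriesAt i j k (mapPairAt R i j b) = mapFirstTwo R (entriesAt i j k b) := by
  simp only [entriesAt, mapFirstTwo, mapPairAt_apply_left, mapPairAt_apply_right R hij,
    mapPairAt_apply_of_ne R hik.symm hjk.symm]

theorem entriesAt_mapPairAt_last (R : X × X → X × X) (hij : i ≠ j) (hik : i ≠ k) (hjk : j ≠ k)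
    (b : ι → X) :
    entriesAt i j k (mapPairAt R j k b) = mapLastTwo R (entriesAt i j k b) := by
  simp only [entriesAt, mapLastTwo, Prod.map_apply, id_eq, mapPairAt_apply_left,
    mapPairAt_apply_right R hjk, mapPairAt_apply_of_ne R hij hik]

theorem mapPairAt_braid_of_triples {R₁ R₂ R₃ S₁ S₂ S₃ : X × X → X × X}
    (hij : i ≠ j) (hik : i ≠ k) (hjk : j ≠ k)
    (hbraid : mapFirstTwo R₁ ∘ mapLastTwo R₂ ∘ mapFirstTwo R₃ =
      mapLastTwo S₁ ∘ mapFirstTwo S₂ ∘ mapLastTwo S₃) :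
    mapPairAt R₁ i j ∘ mapPairAt R₂ j k ∘ mapPairAt R₃ i j =
      mapPairAt S₁ j k ∘ mapPairAt S₂ i j ∘ mapPairAt S₃ j k := by
  funext b
  apply eq_of_entriesAt_eq (i := i) (j := j) (k := k)
  · simpa only [Function.comp_apply, entriesAt_mapPairAt_first _ hij hik hjk,
      entriesAt_mapPairAt_last _ hij hik hjk] using congrFun hbraid (entriesAt i j k b)
  · intro l hli hlj hlk
    simp only [Function.comp_apply, mapPairAt_apply_of_ne _ hli hlj,
      mapPairAt_apply_of_ne _ hlj hlk]

end Tuples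

section Group

variable {G : Type*} [Group G]

/-- The map `ψ_g : G × G → G × G`, the set-theoretic R-matrix of color `g`. -/
def coloredRMatrix (g : G) : G × G → G × G :=
  fun (x, y) => (y * x⁻¹ * g⁻¹ * x, x)

theorem coloredRMatrix_braid (g h : G) :
    mapFirstTwo (coloredRMatrix h) ∘ mapLastTwo (coloredRMatrix g) ∘
        mapFirstTwo (coloredRMatrix g) =
      mapLastTwo (coloredRMatrix g) ∘ mapFirstTwo (coloredRMatrix g) ∘
        mapLastTwo (coloredRMatrix h) := by
  funext ⟨x, y, z⟩
  have first_entry : z * x⁻¹ * g⁻¹ * x * (y * x⁻¹ * g⁻¹ * x)⁻¹ * h⁻¹ * (y * x⁻¹ * g⁻¹ * x) =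
      z * y⁻¹ * h⁻¹ * y * x⁻¹ * g⁻¹ * x := by
    group
  simp only [Function.comp_apply, mapFirstTwo, mapLastTwo, coloredRMatrix, Prod.map_apply, id_eq,
    first_entry]

theorem Psi_eq_mapPairAt {n : ℕ} (g : G) (i : ℕ) (hi : i + 1 < n) :
    Psi g i hi = mapPairAt (coloredRMatrix g) ⟨i, Nat.lt_of_succ_lt hi⟩ ⟨i + 1, hi⟩ := by
  funext b l
  simp only [Psi, mapPairAt, coloredRMatrix, Function.update_apply]

theorem stmt12_general {ι : Type*} [DecidableEq ι] {i j k : ι} (hij : i ≠ j) (hik : i ≠ k)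
    (hjk : j ≠ k) (g h : G) :
    mapPairAt (coloredRMatrix h) i j ∘ mapPairAt (coloredRMatrix g) j k ∘
        mapPairAt (coloredRMatrix g) i j =
      mapPairAt (coloredRMatrix g) j k ∘ mapPairAt (coloredRMatrix g) i j ∘
        mapPairAt (coloredRMatrix h) j k :=
  mapPairAt_braid_of_triples hij hik hjk (coloredRMatrix_braid g h)

end Group

/-- the colored braid relation
`Ψ_i[h] ∘ Ψ_{i+1}[g] ∘ Ψ_i[g] = Ψ_{i+1}[g] ∘ Ψ_i[g] ∘ Ψ_{i+1}[h]`
(with `i` 0-indexed, ranging over `0,…,n-3`). -/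
theorem stmt12 {G : Type*} [Group G] {n : ℕ} (hn : 3 ≤ n) (i : ℕ)
    (hi : i + 2 < n) (g h : G) :
    Psi h i (by omega) ∘ Psi g (i + 1) hi ∘ Psi g i (by omega) =
      Psi g (i + 1) hi ∘ Psi g i (by omega) ∘ Psi h (i + 1) hi := by
  simp only [Psi_eq_mapPairAt]
  apply stmt12_general <;> exact Fin.ne_of_val_ne (by dsimp only; omega)
end

section
/- Let G be a group, n ≥ 3, and let u, v be indices with 2 ≤ u, v ≤ n-1 and |u - v| ≥ 2. Then for all g, k ∈ G, the maps Φ_u[k] and Φ_v[g] on Gⁿ commute: Φ_u[k] ∘ Φ_v[g] = Φ_v[g] ∘ Φ_u[k]. -/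
/-- `Φ_v[g]` (parametrized here by `t = v - 2`, the 0-based index of the leftmost modified
position; the modified positions are `t, t+1, t+2`): the map sending `(a₁,…,aₙ)` to the
tuple whose `(v-1)`-th entry is `a_{v-1}·g·a_v`, whose `v`-th entry is `a_v⁻¹·g⁻¹`, whose
`(v+1)`-th entry is `a_v·a_{v+1}`, all other entries unchanged. -/
def Phi {G : Type*} [Group G] {n : ℕ} (g : G) (t : ℕ) (ht : t + 2 < n)
    (a : Fin n → G) : Fin n → G := fun j =>
  if j = (⟨t, by omega⟩ : Fin n) then a ⟨t, by omega⟩ * g * a ⟨t + 1, by omega⟩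
  else if j = (⟨t + 1, by omega⟩ : Fin n) then (a ⟨t + 1, by omega⟩)⁻¹ * g⁻¹
  else if j = (⟨t + 2, ht⟩ : Fin n) then a ⟨t + 1, by omega⟩ * a ⟨t + 2, ht⟩
  else a j

/-!
Write the entries of a tuple as quotients `aᵢ = pᵢ⁻¹ * pᵢ₊₁` of consecutive terms of a sequence
`p`, for instance the partial products of `a`. In these coordinates `Φ_v[g]` replaces just two
neighbouring terms `(x, y)` by `(x * g * x⁻¹ * y, x)`, and for `|u - v| ≥ 2` the two pairs of
positions are disjoint.
-/

theorem commute_of_semiconj_of_surjective {α β : Type*} {π : α → β} (hπ : π.Surjective)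
    {f₁ f₂ : α → α} {F₁ F₂ : β → β} (h₁ : Function.Semiconj π f₁ F₁)
    (h₂ : Function.Semiconj π f₂ F₂) (h : Function.Commute f₁ f₂) : Function.Commute F₁ F₂ := by
  refine hπ.forall.2 fun x => ?_
  calc F₁ (F₂ (π x)) = π (f₁ (f₂ x)) := ((h₁.comp_right h₂).eq x).symm
    _ = π (f₂ (f₁ x)) := congrArg π (h.eq x)
    _ = F₂ (F₁ (π x)) := (h₂.comp_right h₁).eq x

section TwistedSwap

variable {ι G : Type*} [DecidableEq ι] [Group G]

/-- The swap of the entries `x = p i` and `y = p j` of a family `p`, twisted by `g`: it replaces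
the pair `(x, y)` by `(x * g * x⁻¹ * y, x)`. This is `Φ_v[g]` in partial-product coordinates.
It is meant for `i ≠ j`; at `i = j` the outer update wins and the map is the identity. -/
def twistedSwap (g : G) (i j : ι) (p : ι → G) : ι → G :=
  Function.update (Function.update p i (p i * g * (p i)⁻¹ * p j)) j (p i)

theorem commute_twistedSwap (g k : G) {i j i' j' : ι} (hii' : i ≠ i') (hij' : i ≠ j')
    (hji' : j ≠ i') (hjj' : j ≠ j') :
    Function.Commute (twistedSwap g i j) (twistedSwap k i' j') := by
  intro p
  simp only [twistedSwap, ne_eq, not_false_eq_true, Function.update_of_ne, hii', hij', hji', hjj',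
    hii'.symm, hij'.symm, hji'.symm, hjj'.symm]
  rw [Function.update_comm hji', Function.update_comm hjj', Function.update_comm hii',
    Function.update_comm hij']

end TwistedSwap

section ConsecutiveQuotients

variable {G : Type*} [Group G] {n : ℕ}

/-- The tuple of quotients `(p i)⁻¹ * p (i + 1)` of consecutive terms of `p`, a left inverse of
`Fin.partialProd`. -/
def consecutiveQuotients (p : Fin (n + 1) → G) : Fin n → G :=
  fun i => (p i.castSucc)⁻¹ * p i.succ

theorem consecutiveQuotients_surjective :
    Function.Surjective (consecutiveQuotients : (Fin (n + 1) → G) → Fin n → G) :=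
  fun a => ⟨Fin.partialProd a, funext (Fin.partialProd_right_inv a)⟩

theorem semiconj_consecutiveQuotients_twistedSwap_Phi (g : G) (t : ℕ) (ht : t + 2 < n) :
    Function.Semiconj consecutiveQuotients
      (twistedSwap g (⟨t + 1, by omega⟩ : Fin (n + 1)) ⟨t + 2, by omega⟩) (Phi g t ht) := by
  intro p
  ext ⟨j, hj⟩
  simp only [consecutiveQuotients, twistedSwap, Phi, Function.update_apply, Fin.castSucc_mk,
    Fin.succ_mk, Fin.mk.injEq]
  rcases eq_or_ne j t with rfl | hj₀
  · simp [mul_assoc]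
  rcases eq_or_ne j (t + 1) with rfl | hj₁
  · simp [mul_assoc]
  rcases eq_or_ne j (t + 2) with rfl | hj₂
  · simp
  simp [hj₀, hj₁, hj₂]

end ConsecutiveQuotients

/-- if `|u - v| ≥ 2` then `Φ_u[k]` and `Φ_v[g]` commute
(here `t = u - 2` and `s = v - 2` in the 0-based indexing of `Phi`). -/
theorem stmt14 {G : Type*} [Group G] {n : ℕ} (hn : 3 ≤ n) (t s : ℕ)
    (ht : t + 2 < n) (hs : s + 2 < n) (hts : t + 2 ≤ s ∨ s + 2 ≤ t) (g k : G) :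
    Phi k t ht ∘ Phi g s hs = Phi g s hs ∘ Phi k t ht := by
  have swaps_commute :
      Function.Commute (twistedSwap k (⟨t + 1, by omega⟩ : Fin (n + 1)) ⟨t + 2, by omega⟩)
        (twistedSwap g ⟨s + 1, by omega⟩ ⟨s + 2, by omega⟩) := by
    apply commute_twistedSwap <;> simp only [ne_eq, Fin.mk.injEq] <;> omega
  exact (commute_of_semiconj_of_surjective consecutiveQuotients_surjective
    (semiconj_consecutiveQuotients_twistedSwap_Phi k t ht)
    (semiconj_consecutiveQuotients_twistedSwap_Phi g s hs) swaps_commute).comp_eq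
end

section
/- Let G be a group, n ≥ 4, and let v be an index with 2 ≤ v ≤ n-2. Then for all g, h ∈ G, the following braid relation holds on Gⁿ: Φ_v[h] ∘ Φ_{v+1}[g] ∘ Φ_v[g] = Φ_{v+1}[g] ∘ Φ_v[g] ∘ Φ_{v+1}[h]. -/
/-!
The composite `Ψ = Φ_{v+1}[g] ∘ Φ_v[g]` acts on positions `v-1, …, v+2` by
`(x, y, z, w) ↦ (x g y, z, (y z)⁻¹ g⁻¹, y z w)`: the two copies of `g` cancel in the second entry,
so `z` moves one place to the left unchanged. Both `Φ_v[h] ∘ Ψ` and `Ψ ∘ Φ_{v+1}[h]` then send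
`(x, y, z, w)` to `(x g y h z, z⁻¹ h⁻¹, y⁻¹ g⁻¹, y z w)`.
-/

section Entries

variable {G : Type*} [Group G] {g : G} {t n : ℕ} {ht : t + 2 < n} {a : Fin n → G}

theorem Phi_apply_self :
    Phi g t ht a ⟨t, by omega⟩ = a ⟨t, by omega⟩ * g * a ⟨t + 1, by omega⟩ := by
  simp [Phi]

theorem Phi_apply_add_one :
    Phi g t ht a ⟨t + 1, by omega⟩ = (a ⟨t + 1, by omega⟩)⁻¹ * g⁻¹ := by
  simp [Phi]

theorem Phi_apply_add_two :
    Phi g t ht a ⟨t + 2, ht⟩ = a ⟨t + 1, by omega⟩ * a ⟨t + 2, ht⟩ := by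
  simp [Phi]

theorem Phi_apply_of_lt_or_lt {j : ℕ} {hj : j < n} (hjt : j < t ∨ t + 2 < j) :
    Phi g t ht a ⟨j, hj⟩ = a ⟨j, hj⟩ := by
  have h0 : j ≠ t := by omega
  have h1 : j ≠ t + 1 := by omega
  have h2 : j ≠ t + 2 := by omega
  simp [Phi, h0, h1, h2]

end Entries

section Composite

variable {G : Type*} [Group G] {g : G} {t n : ℕ} {ht : t + 3 < n} {a : Fin n → G}

theorem Phi_succ_Phi_apply_self :
    Phi g (t + 1) ht (Phi g t (by omega) a) ⟨t, by omega⟩ =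
      a ⟨t, by omega⟩ * g * a ⟨t + 1, by omega⟩ := by
  rw [Phi_apply_of_lt_or_lt (by omega), Phi_apply_self]

theorem Phi_succ_Phi_apply_add_one :
    Phi g (t + 1) ht (Phi g t (by omega) a) ⟨t + 1, by omega⟩ = a ⟨t + 2, by omega⟩ := by
  rw [Phi_apply_self, Phi_apply_add_one, Phi_apply_add_two]
  group

theorem Phi_succ_Phi_apply_add_two :
    Phi g (t + 1) ht (Phi g t (by omega) a) ⟨t + 2, by omega⟩ =
      (a ⟨t + 1, by omega⟩ * a ⟨t + 2, by omega⟩)⁻¹ * g⁻¹ := by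
  rw [Phi_apply_add_one, Phi_apply_add_two]

theorem Phi_succ_Phi_apply_add_three :
    Phi g (t + 1) ht (Phi g t (by omega) a) ⟨t + 3, ht⟩ =
      a ⟨t + 1, by omega⟩ * a ⟨t + 2, by omega⟩ * a ⟨t + 3, ht⟩ := by
  rw [Phi_apply_add_two, Phi_apply_add_two, Phi_apply_of_lt_or_lt (by omega)]

theorem Phi_succ_Phi_apply_of_lt_or_lt {j : ℕ} {hj : j < n} (hjt : j < t ∨ t + 3 < j) :
    Phi g (t + 1) ht (Phi g t (by omega) a) ⟨j, hj⟩ = a ⟨j, hj⟩ := by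
  rw [Phi_apply_of_lt_or_lt (by omega), Phi_apply_of_lt_or_lt (by omega)]

end Composite

/-- the braid relation
`Φ_v[h] ∘ Φ_{v+1}[g] ∘ Φ_v[g] = Φ_{v+1}[g] ∘ Φ_v[g] ∘ Φ_{v+1}[h]`
(here `t = v - 2` in the 0-based indexing of `Phi`, `t` ranging over `0,…,n-4`). -/
theorem stmt15 {G : Type*} [Group G] {n : ℕ} (hn : 4 ≤ n) (t : ℕ)
    (ht : t + 3 < n) (g h : G) :
    Phi h t (by omega) ∘ Phi g (t + 1) ht ∘ Phi g t (by omega) =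
      Phi g (t + 1) ht ∘ Phi g t (by omega) ∘ Phi h (t + 1) ht := by
  funext a ⟨j, hj⟩
  simp only [Function.comp_apply]
  obtain rfl | rfl | rfl | rfl | outside :
      j = t ∨ j = t + 1 ∨ j = t + 2 ∨ j = t + 3 ∨ (j < t ∨ t + 3 < j) := by omega
  · rw [Phi_apply_self, Phi_succ_Phi_apply_self, Phi_succ_Phi_apply_add_one,
      Phi_succ_Phi_apply_self, Phi_apply_of_lt_or_lt (by omega), Phi_apply_self]
    group
  · rw [Phi_apply_add_one, Phi_succ_Phi_apply_add_one, Phi_succ_Phi_apply_add_one,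
      Phi_apply_add_one]
  · rw [Phi_apply_add_two, Phi_succ_Phi_apply_add_one, Phi_succ_Phi_apply_add_two,
      Phi_succ_Phi_apply_add_two, Phi_apply_self, Phi_apply_add_one]
    group
  · rw [Phi_apply_of_lt_or_lt (by omega), Phi_succ_Phi_apply_add_three,
      Phi_succ_Phi_apply_add_three, Phi_apply_self, Phi_apply_add_one, Phi_apply_add_two]
    group
  · rw [Phi_apply_of_lt_or_lt (by omega), Phi_succ_Phi_apply_of_lt_or_lt outside,
      Phi_succ_Phi_apply_of_lt_or_lt outside, Phi_apply_of_lt_or_lt (by omega)]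
end

section
/- Let G be a group, n ≥ 2, g₁,…,gₙ ∈ G, and let i be an index with 1 ≤ i ≤ n-1. Then the map Ψ_i[gᵢ] restricts to a bijection from D̄_{g₁,…,gₙ} onto D̄_{g₁,…,g_{i-1},g_{i+1},g_i,g_{i+2},…,gₙ} (the g-sequence with the i-th and (i+1)-th entries swapped). Moreover, Ψ_i[gᵢ] commutes with the diagonal right translation action of G on Gⁿ: for every (b₁,…,bₙ) ∈ Gⁿ and every g ∈ G, Ψ_i[gᵢ](b₁·g,…,bₙ·g) = (c₁·g,…,cₙ·g), where (c₁,…,cₙ) = Ψ_i[gᵢ](b₁,…,bₙ). -/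
/-- `D̄_{g₁,…,gₙ}` : the set of tuples `(b₁,…,bₙ)` with
`(b₁⁻¹·g₁·b₁)·(b₂⁻¹·g₂·b₂)·⋯·(bₙ⁻¹·gₙ·bₙ) = 1`. -/
def Dbar {G : Type*} [Group G] {n : ℕ} (g : Fin n → G) : Set (Fin n → G) :=
  {b | (List.ofFn fun i => (b i)⁻¹ * g i * b i).prod = 1}

/-!
Put `xⱼ = bⱼ⁻¹ gⱼ bⱼ`, so that `D̄_g` is the locus `x₁ ⋯ xₙ = 1`. The `i`-th entry of `Ψ_i[gᵢ](b)`
is `b_{i+1} xᵢ⁻¹`, so on the `x`-tuple `Ψ_i[gᵢ]` acts as the Hurwitz move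
`(xᵢ, x_{i+1}) ↦ (xᵢ x_{i+1} xᵢ⁻¹, xᵢ)`, which preserves the product.
-/

theorem prod_ofFn_congr_of_adjacent {M : Type*} [Monoid M] {n i : ℕ} (hi : i + 1 < n)
    {x y : Fin n → M}
    (hpair : x ⟨i, Nat.lt_of_succ_lt hi⟩ * x ⟨i + 1, hi⟩ =
      y ⟨i, Nat.lt_of_succ_lt hi⟩ * y ⟨i + 1, hi⟩)
    (hrest : ∀ j, j ≠ ⟨i, Nat.lt_of_succ_lt hi⟩ → j ≠ ⟨i + 1, hi⟩ → x j = y j) :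
    (List.ofFn x).prod = (List.ofFn y).prod := by
  induction i generalizing n with
  | zero =>
    obtain ⟨m, rfl⟩ : ∃ m, n = m + 2 := ⟨n - 2, by omega⟩
    have htail : (fun j : Fin m => x j.succ.succ) = fun j => y j.succ.succ :=
      funext fun j => hrest _ (by simp [Fin.ext_iff]) (by simp [Fin.ext_iff])
    have hhead : x 0 * x (Fin.succ 0) = y 0 * y (Fin.succ 0) := hpair
    simp only [List.ofFn_succ, List.prod_cons, ← mul_assoc, htail, hhead]
  | succ i ih =>
    obtain ⟨m, rfl⟩ : ∃ m, n = m + 1 := ⟨n - 1, by omega⟩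
    have hhead : x 0 = y 0 := hrest 0 (by simp [Fin.ext_iff]) (by simp [Fin.ext_iff])
    have htail : (List.ofFn fun j : Fin m => x j.succ).prod =
        (List.ofFn fun j : Fin m => y j.succ).prod :=
      ih (Nat.lt_of_succ_lt_succ hi) hpair fun j hj hj' =>
        hrest _ (by simpa [Fin.ext_iff] using hj) (by simpa [Fin.ext_iff] using hj')
    simp only [List.ofFn_succ, List.prod_cons, hhead, htail]

section Psi

variable {G : Type*} [Group G] {n i : ℕ} (hi : i + 1 < n)

theorem Psi_apply_left (g : G) (b : Fin n → G) :
    Psi g i hi b ⟨i, Nat.lt_of_succ_lt hi⟩ =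
      b ⟨i + 1, hi⟩ * (b ⟨i, Nat.lt_of_succ_lt hi⟩)⁻¹ * g⁻¹ * b ⟨i, Nat.lt_of_succ_lt hi⟩ :=
  if_pos rfl

theorem Psi_apply_right (g : G) (b : Fin n → G) :
    Psi g i hi b ⟨i + 1, hi⟩ = b ⟨i, Nat.lt_of_succ_lt hi⟩ := by
  simp [Psi]

theorem Psi_apply_of_ne (g : G) (b : Fin n → G) {j : Fin n}
    (hj : j ≠ ⟨i, Nat.lt_of_succ_lt hi⟩) (hj' : j ≠ ⟨i + 1, hi⟩) :
    Psi g i hi b j = b j := by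
  simp only [Psi, if_neg hj, if_neg hj']

theorem Psi_mul_right (g : G) (b : Fin n → G) (x : G) :
    Psi g i hi (fun j => b j * x) = fun j => Psi g i hi b j * x := by
  funext j
  simp only [Psi]
  split_ifs
  · group
  · rfl
  · rfl

/-- The inverse of `Ψ_i[g]`, obtained by solving `Psi g i hi b = c` for `b`: first
`bᵢ = c_{i+1}`, then `b_{i+1} = cᵢ · bᵢ⁻¹ · g · bᵢ`. -/
def PsiInv (g : G) (i : ℕ) (hi : i + 1 < n) (c : Fin n → G) : Fin n → G := fun j =>
  if j = ⟨i, Nat.lt_of_succ_lt hi⟩ then c ⟨i + 1, hi⟩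
  else if j = ⟨i + 1, hi⟩ then
    c ⟨i, Nat.lt_of_succ_lt hi⟩ * (c ⟨i + 1, hi⟩)⁻¹ * g * c ⟨i + 1, hi⟩
  else c j

theorem PsiInv_Psi (g : G) (b : Fin n → G) : PsiInv g i hi (Psi g i hi b) = b := by
  funext j
  simp only [PsiInv, Psi_apply_left, Psi_apply_right]
  split_ifs with hj hj'
  · rw [hj]
  · rw [hj']
    group
  · exact Psi_apply_of_ne hi g b hj hj'

theorem Psi_PsiInv (g : G) (c : Fin n → G) : Psi g i hi (PsiInv g i hi c) = c := by
  funext j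
  by_cases hj : j = ⟨i, Nat.lt_of_succ_lt hi⟩
  · subst hj
    simp [Psi_apply_left, PsiInv, mul_assoc]
  by_cases hj' : j = ⟨i + 1, hi⟩
  · subst hj'
    simp [Psi_apply_right, PsiInv]
  · simp only [Psi_apply_of_ne hi _ _ hj hj', PsiInv, if_neg hj, if_neg hj']

/-- `Ψ_i[g]` as a permutation of `Gⁿ`. -/
def PsiEquiv (g : G) (i : ℕ) (hi : i + 1 < n) : Equiv.Perm (Fin n → G) where
  toFun := Psi g i hi
  invFun := PsiInv g i hi
  left_inv := PsiInv_Psi hi g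
  right_inv := Psi_PsiInv hi g

/-- The tuple of conjugates `bⱼ⁻¹ · gⱼ · bⱼ`, whose ordered product defines `Dbar g`. -/
def conjTuple (g b : Fin n → G) : Fin n → G := fun j => (b j)⁻¹ * g j * b j

theorem mem_Dbar_iff {g b : Fin n → G} : b ∈ Dbar g ↔ (List.ofFn (conjTuple g b)).prod = 1 :=
  Iff.rfl

variable (g b : Fin n → G)

theorem conjTuple_swap_Psi_left :
    conjTuple (fun j => g (Equiv.swap ⟨i, Nat.lt_of_succ_lt hi⟩ ⟨i + 1, hi⟩ j))
        (Psi (g ⟨i, Nat.lt_of_succ_lt hi⟩) i hi b) ⟨i, Nat.lt_of_succ_lt hi⟩ =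
      conjTuple g b ⟨i, Nat.lt_of_succ_lt hi⟩ * conjTuple g b ⟨i + 1, hi⟩ *
        (conjTuple g b ⟨i, Nat.lt_of_succ_lt hi⟩)⁻¹ := by
  simp only [conjTuple, Psi_apply_left, Equiv.swap_apply_left]
  group

theorem conjTuple_swap_Psi_right :
    conjTuple (fun j => g (Equiv.swap ⟨i, Nat.lt_of_succ_lt hi⟩ ⟨i + 1, hi⟩ j))
        (Psi (g ⟨i, Nat.lt_of_succ_lt hi⟩) i hi b) ⟨i + 1, hi⟩ =
      conjTuple g b ⟨i, Nat.lt_of_succ_lt hi⟩ := by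
  simp only [conjTuple, Psi_apply_right, Equiv.swap_apply_right]

theorem conjTuple_swap_Psi_of_ne (a : G) {j : Fin n}
    (hj : j ≠ ⟨i, Nat.lt_of_succ_lt hi⟩) (hj' : j ≠ ⟨i + 1, hi⟩) :
    conjTuple (fun k => g (Equiv.swap ⟨i, Nat.lt_of_succ_lt hi⟩ ⟨i + 1, hi⟩ k))
        (Psi a i hi b) j =
      conjTuple g b j := by
  simp only [conjTuple, Psi_apply_of_ne hi _ _ hj hj', Equiv.swap_apply_of_ne_of_ne hj hj']

theorem prod_conjTuple_swap_Psi :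
    (List.ofFn (conjTuple (fun j => g (Equiv.swap ⟨i, Nat.lt_of_succ_lt hi⟩ ⟨i + 1, hi⟩ j))
        (Psi (g ⟨i, Nat.lt_of_succ_lt hi⟩) i hi b))).prod =
      (List.ofFn (conjTuple g b)).prod := by
  refine prod_ofFn_congr_of_adjacent hi ?_ fun j => conjTuple_swap_Psi_of_ne hi g b _
  rw [conjTuple_swap_Psi_left, conjTuple_swap_Psi_right, inv_mul_cancel_right]

theorem Psi_mem_Dbar_swap_iff :
    Psi (g ⟨i, Nat.lt_of_succ_lt hi⟩) i hi b ∈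
        Dbar (fun j => g (Equiv.swap ⟨i, Nat.lt_of_succ_lt hi⟩ ⟨i + 1, hi⟩ j)) ↔
      b ∈ Dbar g := by
  rw [mem_Dbar_iff, mem_Dbar_iff, prod_conjTuple_swap_Psi]

end Psi

/-- `Ψ_i[gᵢ]` restricts to a bijection from `D̄_{g₁,…,gₙ}` onto
`D̄` of the sequence with the `i`-th and `(i+1)`-th colors swapped, and it commutes
with the diagonal right translation action of `G` on `Gⁿ`. -/
theorem stmt16 {G : Type*} [Group G] {n : ℕ} (hn : 2 ≤ n) (g : Fin n → G)
    (i : ℕ) (hi : i + 1 < n) :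
    Set.BijOn (Psi (g ⟨i, Nat.lt_of_succ_lt hi⟩) i hi) (Dbar g)
      (Dbar (fun j => g (Equiv.swap (⟨i, Nat.lt_of_succ_lt hi⟩ : Fin n) ⟨i + 1, hi⟩ j))) ∧
    ∀ (b : Fin n → G) (x : G),
      Psi (g ⟨i, Nat.lt_of_succ_lt hi⟩) i hi (fun j => b j * x) =
        fun j => Psi (g ⟨i, Nat.lt_of_succ_lt hi⟩) i hi b j * x := by
  exact ⟨(PsiEquiv (g ⟨i, Nat.lt_of_succ_lt hi⟩) i hi).bijOn (Psi_mem_Dbar_swap_iff hi g),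
    Psi_mul_right hi (g ⟨i, Nat.lt_of_succ_lt hi⟩)⟩
end

section
/- Let G be a group, n ≥ 2, and g₁,…,gₙ ∈ G. Let H : Gⁿ → Gⁿ be the map (b₁,…,bₙ) ↦ (b₁·b₂⁻¹, b₂·b₃⁻¹, …, b_{n-1}·bₙ⁻¹, bₙ·b₁⁻¹). Then: (i) H maps D̄_{g₁,…,gₙ} into 𝒟_{g₁,…,gₙ}; (ii) every element of 𝒟_{g₁,…,gₙ} is of the form H(b) for some b ∈ D̄_{g₁,…,gₙ}; (iii) for b, d ∈ D̄_{g₁,…,gₙ}, H(b) = H(d) if and only if there exists g ∈ G with dᵢ = bᵢ·g for all 1 ≤ i ≤ n. In particular H induces a bijection from the quotient of D̄_{g₁,…,gₙ} by the diagonal right G-action onto 𝒟_{g₁,…,gₙ}. -/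
/-- The map `H : (b₁,…,bₙ) ↦ (b₁·b₂⁻¹, b₂·b₃⁻¹, …, b_{n-1}·bₙ⁻¹, bₙ·b₁⁻¹)`
(indices taken cyclically). -/
def Hmap {G : Type*} [Group G] {n : ℕ} [NeZero n] (b : Fin n → G) : Fin n → G :=
  fun j => b j * (b (j + 1))⁻¹

/-!
The map `H` is the coboundary on a cycle. Writing `a = H b`, each conjugate `bᵢ⁻¹ gᵢ bᵢ` equals
`bᵢ⁻¹ (gᵢ aᵢ) bᵢ₊₁`, so the product of the conjugates telescopes to `b₁⁻¹ (g₁ a₁ ⋯ gₙ aₙ) b₁`;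
with all `gᵢ = 1` this also gives `a₁ ⋯ aₙ = 1`. Conversely, a tuple `a` with `a₁ ⋯ aₙ = 1` is
`H b` for `bᵢ = (a₁ ⋯ aᵢ₋₁)⁻¹`, the condition on the product closing the cycle. Finally
`H b = H d` says that `bᵢ⁻¹ dᵢ` does not depend on `i`.
-/

section CyclicIndex

open scoped Fin.CommRing

variable {α : Type*} {n : ℕ} [NeZero n]

theorem eq_apply_zero_of_apply_add_one_eq {c : Fin n → α} (hc : ∀ i, c (i + 1) = c i)
    (i : Fin n) : c i = c 0 := by
  have natCast_eq (k : ℕ) : c k = c 0 := by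
    induction k with
    | zero => rw [Nat.cast_zero]
    | succ k ih => rw [Nat.cast_succ, hc, ih]
  simpa only [Fin.cast_val_eq_self] using natCast_eq i

theorem apply_castSucc_add_one_of_apply_last_eq {f : Fin (n + 1) → α}
    (hf : f (Fin.last n) = f 0) (j : Fin n) : f (j + 1).castSucc = f j.succ := by
  obtain ⟨m, rfl⟩ := Nat.exists_eq_succ_of_ne_zero (NeZero.ne n)
  induction j using Fin.lastCases with
  | last => rw [Fin.last_add_one, Fin.castSucc_zero, Fin.succ_last, hf]
  | cast j => rw [Fin.coeSucc_eq_succ, Fin.succ_castSucc]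

end CyclicIndex

section Telescoping

open scoped Fin.CommRing

variable {G : Type*} [Group G] {n : ℕ}

theorem prod_ofFn_inv_mul_mul_succ (c : ℕ → G) (u : Fin n → G) :
    (List.ofFn fun i : Fin n => (c i)⁻¹ * u i * c (i + 1)).prod =
      (c 0)⁻¹ * (List.ofFn u).prod * c n := by
  induction n with
  | zero => simp
  | succ n ih =>
    rw [List.ofFn_succ', List.ofFn_succ', List.prod_concat, List.prod_concat]
    simp only [Fin.val_castSucc, Fin.val_last, ih]
    group

theorem prod_ofFn_inv_mul_mul_cyclic [NeZero n] (b u : Fin n → G) :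
    (List.ofFn fun i => (b i)⁻¹ * u i * b (i + 1)).prod =
      (b 0)⁻¹ * (List.ofFn u).prod * b 0 := by
  simpa using prod_ofFn_inv_mul_mul_succ (fun k => b k) u

theorem inv_mul_mul_eq_one_iff {x y : G} : x⁻¹ * y * x = 1 ↔ y = 1 := by
  simpa only [inv_inv] using conj_eq_one_iff (a := x⁻¹) (b := y)

theorem partialProd_last {M : Type*} [Monoid M] (a : Fin n → M) :
    Fin.partialProd a (Fin.last n) = (List.ofFn a).prod := by
  rw [Fin.partialProd, Fin.val_last, List.take_of_length_le (by rw [List.length_ofFn])]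

end Telescoping

section Hmap

variable {G : Type*} [Group G] {n : ℕ} [NeZero n]

theorem prod_ofFn_conj_eq_conj_prod_mul_hmap (g b : Fin n → G) :
    (List.ofFn fun i => (b i)⁻¹ * g i * b i).prod =
      (b 0)⁻¹ * (List.ofFn fun i => g i * Hmap b i).prod * b 0 := by
  rw [← prod_ofFn_inv_mul_mul_cyclic]
  simp only [Hmap, mul_assoc, inv_mul_cancel, mul_one]

theorem prod_ofFn_hmap (b : Fin n → G) : (List.ofFn (Hmap b)).prod = 1 := by
  have conj_prod_eq_one : (b 0)⁻¹ * (List.ofFn (Hmap b)).prod * b 0 = 1 := by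
    simpa using (prod_ofFn_conj_eq_conj_prod_mul_hmap 1 b).symm
  exact inv_mul_mul_eq_one_iff.1 conj_prod_eq_one

theorem hmap_mem_dset_iff {g b : Fin n → G} : Hmap b ∈ Dset g ↔ b ∈ Dbar g := by
  simp only [Dset, Dbar, Set.mem_ofPred_eq, prod_ofFn_hmap, and_true,
    prod_ofFn_conj_eq_conj_prod_mul_hmap, inv_mul_mul_eq_one_iff]

theorem exists_hmap_eq_of_prod_ofFn_eq_one {a : Fin n → G} (ha : (List.ofFn a).prod = 1) :
    ∃ b, Hmap b = a := by
  have closes_up : Fin.partialProd a (Fin.last n) = Fin.partialProd a 0 := by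
    rw [partialProd_last, ha, Fin.partialProd_zero]
  refine ⟨fun j => (Fin.partialProd a j.castSucc)⁻¹, funext fun j => ?_⟩
  rw [Hmap, inv_inv, apply_castSucc_add_one_of_apply_last_eq closes_up,
    Fin.partialProd_right_inv]

theorem hmap_eq_hmap_iff {b d : Fin n → G} :
    Hmap b = Hmap d ↔ ∃ x : G, ∀ i, d i = b i * x := by
  constructor
  · intro h
    have ratio_add_one (i : Fin n) : (b (i + 1))⁻¹ * d (i + 1) = (b i)⁻¹ * d i := by
      have h_i : b i * (b (i + 1))⁻¹ = d i * (d (i + 1))⁻¹ := congrFun h i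
      rw [eq_inv_mul_iff_mul_eq, ← mul_assoc, h_i, inv_mul_cancel_right]
    refine ⟨(b 0)⁻¹ * d 0, fun i => ?_⟩
    rw [← eq_apply_zero_of_apply_add_one_eq (c := fun i => (b i)⁻¹ * d i) ratio_add_one i,
      mul_inv_cancel_left]
  · rintro ⟨x, hx⟩
    funext i
    simp only [Hmap, hx, mul_inv_rev, mul_assoc, mul_inv_cancel_left]

end Hmap

/-- (i) `H` maps `D̄_{g₁,…,gₙ}` into `𝒟_{g₁,…,gₙ}`; (ii) every element of
`𝒟_{g₁,…,gₙ}` is `H(b)` for some `b ∈ D̄_{g₁,…,gₙ}`; (iii) for `b, d ∈ D̄_{g₁,…,gₙ}`,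
`H(b) = H(d)` iff `d` is a diagonal right translate of `b`. -/
theorem stmt17 {G : Type*} [Group G] {n : ℕ} [NeZero n] (hn : 2 ≤ n)
    (g : Fin n → G) :
    Set.MapsTo Hmap (Dbar g) (Dset g) ∧
    (∀ a ∈ Dset g, ∃ b ∈ Dbar g, Hmap b = a) ∧
    (∀ b ∈ Dbar g, ∀ d ∈ Dbar g,
      (Hmap b = Hmap d ↔ ∃ x : G, ∀ i : Fin n, d i = b i * x)) := by
  refine ⟨fun b hb => hmap_mem_dset_iff.2 hb, fun a ha => ?_, fun b _ d _ => hmap_eq_hmap_iff⟩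
  obtain ⟨b, rfl⟩ := exists_hmap_eq_of_prod_ofFn_eq_one ha.2
  exact ⟨b, hmap_mem_dset_iff.1 ha, rfl⟩
end
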